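/- arXiv:2112.04220 — 4 statements merged into one kernel-verified Lean document; each statement's English description precedes it below -/
import Mathlib

section
/- Let G be a finite non-solvable group such that the number i₂(G) of elements of G of order 2 satisfies i₂(G) < |G|/15. Then o(G) > 211/60, i.e., o(G) > o(A_5). -/
/-- The average element order `o(G) = ψ(G)/|G|` of a finite group `G`,
where `ψ(G) = ∑_{x ∈ G} |x|` is the sum of the orders of all elements of `G`. -/
noncomputable def avgOrder (G : Type*) [Group G] [Fintype G] : ℚ :=
  (∑ x : G, (orderOf x : ℚ)) / (Fintype.card G : ℚ)

/-- `i₂(G)`: the number of elements of order exactly 2 in `G`. -/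
noncomputable def numOrderTwo (G : Type*) [Group G] [Fintype G] : ℕ :=
  (Finset.univ.filter fun g : G => orderOf g = 2).card

/-!
Weigh each `y ∈ G` by `4 - |y|`, and involutions by `0`. The mean weight is
`4 - o(G) - 2 i₂(G) / |G|`, so the theorem says that a mean weight above `7 / 20` forces `G` to be
solvable. Passing to a quotient does not decrease the mean weight, so one may divide out the cores
`O_p(G)` and assume that they are all trivial. If a prime `p ≥ 5` divides `|G|`, let `H ≠ 1` be a
maximal elementary abelian `p`-subgroup. Every coset `Hx` has small mean weight, unless `x`
normalizes `H` and `Hx` consists of cube roots of `1`; such `x` make up at most two thirds of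
`N(H)`, and `[G : N(H)] > p` since `O_p(G) = 1`. Hence the mean weight is at most `7 / 20`. If no
such prime exists, then `|G| = 2^a 3^b` and `G` is solvable by Burnside's theorem, which is proved
with the classical argument on characters and algebraic integers.
-/

open Finset

/-! ### Averaging and order weights -/

theorem sum_le_sum_of_sum_translates_le {A ι : Type*} [Group A] [Fintype A] [Fintype ι]
    [Nonempty ι] (s : ι → A) {f b : A → ℚ}
    (h : ∀ a, ∑ i, f (s i * a) ≤ Fintype.card ι * b a) : ∑ a, f a ≤ ∑ a, b a := by
  have hι : (0 : ℚ) < Fintype.card ι := by exact_mod_cast Fintype.card_pos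
  have htranslate (i : ι) : ∑ a, f (s i * a) = ∑ a, f a := Equiv.sum_comp (Equiv.mulLeft (s i)) f
  refine le_of_mul_le_mul_left ?_ hι
  calc (Fintype.card ι : ℚ) * ∑ a, f a
      = ∑ i : ι, ∑ a, f (s i * a) := by
        simp only [htranslate, sum_const, card_univ, nsmul_eq_mul]
    _ = ∑ a, ∑ i, f (s i * a) := sum_comm
    _ ≤ ∑ a, Fintype.card ι * b a := sum_le_sum fun a _ => h a
    _ = Fintype.card ι * ∑ a, b a := (mul_sum ..).symm

/-- The weight `4 - |y|` of a group element, with the weight of involutions lowered from `2` to `0`.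
Its sum over `G` is `4|G| - ψ(G) - 2 i₂(G)`, and involutions are then never worse than elements of
order `4`. -/
noncomputable def orderWeight {G : Type*} [Group G] (y : G) : ℚ :=
  if orderOf y = 2 then 0 else 4 - orderOf y

section OrderWeight

variable {G : Type*} [Group G]

@[simp]
theorem orderWeight_one : orderWeight (1 : G) = 3 := by
  norm_num [orderWeight]

theorem orderWeight_le_one [Finite G] {y : G} (hy : y ≠ 1) : orderWeight y ≤ 1 := by
  have hpos := orderOf_pos y
  have h1 : orderOf y ≠ 1 := fun h => hy (orderOf_eq_one_iff.mp h)
  unfold orderWeight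
  split_ifs with h2
  · norm_num
  · have h3 : (3 : ℚ) ≤ orderOf y := by exact_mod_cast (by lia : 3 ≤ orderOf y)
    linarith

theorem orderOf_ne_of_pow_ne_one {y : G} {n : ℕ} (h : y ^ n ≠ 1) : orderOf y ≠ n :=
  fun hn => h (hn ▸ pow_orderOf_eq_one y)

theorem orderOf_ne_one_of_pow_ne_one {y : G} {n : ℕ} (h : y ^ n ≠ 1) : orderOf y ≠ 1 :=
  fun h1 => h (by rw [orderOf_eq_one_iff.mp h1, one_pow])

theorem orderWeight_nonpos [Finite G] {y : G} (h3 : y ^ 3 ≠ 1) : orderWeight y ≤ 0 := by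
  have hpos := orderOf_pos y
  have hne1 := orderOf_ne_one_of_pow_ne_one h3
  have hne3 := orderOf_ne_of_pow_ne_one h3
  unfold orderWeight
  split_ifs with h2
  · rfl
  · have h4 : (4 : ℚ) ≤ orderOf y := by exact_mod_cast (by lia : 4 ≤ orderOf y)
    linarith

theorem orderWeight_le_neg_one [Finite G] {y : G} (h3 : y ^ 3 ≠ 1) (h4 : y ^ 4 ≠ 1) :
    orderWeight y ≤ -1 := by
  have hpos := orderOf_pos y
  have hne1 := orderOf_ne_one_of_pow_ne_one h3
  have hne2 : orderOf y ≠ 2 := fun h => h4 (orderOf_dvd_iff_pow_eq_one.mp (by norm_num [h]))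
  have hne3 := orderOf_ne_of_pow_ne_one h3
  have hne4 := orderOf_ne_of_pow_ne_one h4
  have h5 : (5 : ℚ) ≤ orderOf y := by exact_mod_cast (by lia : 5 ≤ orderOf y)
  rw [orderWeight, if_neg hne2]
  linarith

theorem orderWeight_le_orderWeight_map [Finite G] {Q : Type*} [Group Q] (f : G →* Q) (x : G) :
    orderWeight x ≤ orderWeight (f x) := by
  have hpos := orderOf_pos x
  obtain ⟨c, hc⟩ := orderOf_map_dvd f x
  have hc0 : c ≠ 0 := by rintro rfl; simp_all
  have hle : (orderOf (f x) : ℚ) ≤ orderOf x := by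
    exact_mod_cast Nat.le_of_dvd hpos (orderOf_map_dvd f x)
  unfold orderWeight
  split_ifs with hx hfx hfx
  · rfl
  · have : orderOf (f x) ≤ 2 := by exact_mod_cast hx ▸ hle
    have : (orderOf (f x) : ℚ) ≤ 4 := by exact_mod_cast (by lia : orderOf (f x) ≤ 4)
    linarith
  · have : (4 : ℚ) ≤ orderOf x := by
      rw [hfx] at hc
      exact_mod_cast (by lia : 4 ≤ orderOf x)
    linarith
  · linarith

end OrderWeight

/-- The average of `orderWeight` over a finite group. It decreases with the average order, but
unlike the latter it is controlled coset by coset and passes to quotients. -/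
noncomputable def meanOrderWeight (G : Type*) [Group G] [Fintype G] : ℚ :=
  (∑ y : G, orderWeight y) / Fintype.card G

theorem meanOrderWeight_eq (G : Type*) [Group G] [Fintype G] :
    meanOrderWeight G = 4 - avgOrder G - 2 * (numOrderTwo G / Fintype.card G) := by
  have hweight (y : G) :
      orderWeight y = 4 - orderOf y - 2 * (if orderOf y = 2 then 1 else 0 : ℚ) := by
    unfold orderWeight
    split_ifs with h2
    · norm_num [h2]
    · ring
  have hcard : (Fintype.card G : ℚ) ≠ 0 := by exact_mod_cast Fintype.card_ne_zero
  simp only [meanOrderWeight, avgOrder, numOrderTwo, hweight, sum_sub_distrib, ← mul_sum,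
    sum_boole, sum_const, card_univ, nsmul_eq_mul]
  field_simp

theorem meanOrderWeight_le_of_surjective {G Q : Type*} [Group G] [Fintype G] [Group Q] [Fintype Q]
    {f : G →* Q} (hf : Function.Surjective f) : meanOrderWeight G ≤ meanOrderWeight Q := by
  classical
  have hsum (b : Q → ℚ) : ∑ x, b (f x) = #{x | f x = 1} * ∑ y, b y := by
    rw [sum_comp b f, image_univ_of_surjective hf, mul_sum]
    refine sum_congr rfl fun y _ => ?_
    rw [MonoidHom.card_fiber_eq_of_mem_range f (hf y) (hf 1), nsmul_eq_mul]
  have hcard : (Fintype.card G : ℚ) = #{x | f x = 1} * Fintype.card Q := by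
    simpa using hsum 1
  have hG : (0 : ℚ) < Fintype.card G := by exact_mod_cast Fintype.card_pos
  have hQ : (0 : ℚ) < Fintype.card Q := by exact_mod_cast Fintype.card_pos
  rw [meanOrderWeight, meanOrderWeight, div_le_div_iff₀ hG hQ]
  calc (∑ x : G, orderWeight x) * Fintype.card Q
      ≤ (∑ x : G, orderWeight (f x)) * Fintype.card Q := by
        gcongr; exact orderWeight_le_orderWeight_map f _
    _ = (∑ y : Q, orderWeight y) * Fintype.card G := by rw [hsum, hcard]; ring

/-! ### Cosets consisting of cube roots of the identity -/

section Cubes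

variable {G : Type*} [Group G] {x d e : G}

theorem mul_pow_three_eq_conj_mul (d : G) (hx : x ^ 3 = 1) :
    (d * x) ^ 3 = d * (x * d * x⁻¹) * (x * (x * d * x⁻¹) * x⁻¹) := by
  calc (d * x) ^ 3 = d * (x * d * x⁻¹) * (x * (x * d * x⁻¹) * x⁻¹) * x ^ 3 := by
        simp only [pow_succ, pow_zero, one_mul]; group
    _ = d * (x * d * x⁻¹) * (x * (x * d * x⁻¹) * x⁻¹) := by rw [hx, mul_one]

-- With `dᵢ = xⁱdx⁻ⁱ` and `eᵢ = xⁱex⁻ⁱ`, the cubes say `d d₁ d₂ = e e₁ e₂ = (de)(e₁d₁)(d₂e₂) = 1`,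
-- and the first two relations turn the third into `d e₂⁻¹ d⁻¹ e₂ = 1`.
theorem commute_conj_of_pow_three_eq_one (hde : Commute d e) (hx : x ^ 3 = 1)
    (hdx : (d * x) ^ 3 = 1) (hex : (e * x) ^ 3 = 1) (hdex : (d * e * x) ^ 3 = 1) :
    Commute d (x * e * x⁻¹) := by
  rw [mul_pow_three_eq_conj_mul _ hx] at hdx hex hdex
  have hconj_mul : x * (d * e) * x⁻¹ = x * e * x⁻¹ * (x * d * x⁻¹) := by rw [hde.eq]; group
  have hconj₂_mul : x * (x * (d * e) * x⁻¹) * x⁻¹ =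
      x * (x * d * x⁻¹) * x⁻¹ * (x * (x * e * x⁻¹) * x⁻¹) := by group
  rw [hconj₂_mul, hconj_mul] at hdex
  set d₁ := x * d * x⁻¹
  set d₂ := x * d₁ * x⁻¹
  set e₁ := x * e * x⁻¹
  set e₂ := x * e₁ * x⁻¹
  have hd : d₁ * d₂ = d⁻¹ := (inv_eq_of_mul_eq_one_right (by rwa [← mul_assoc])).symm
  have he : e * e₁ = e₂⁻¹ := eq_inv_of_mul_eq_one_left hex
  have hcomm : Commute d (e * e₁) := by
    rw [he, commute_iff_eq]
    have hcommutator : d * e₂⁻¹ * (d⁻¹ * e₂) = 1 := by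
      rw [← he, ← hd, ← hdex]; simp only [mul_assoc]
    simpa only [mul_inv_rev, inv_inv] using eq_inv_of_mul_eq_one_left hcommutator
  simpa using hde.inv_right.mul_right hcomm

theorem pow_mul_pow_three_eq_one (hx : x ^ 3 = 1) (hdx : (d * x) ^ 3 = 1)
    (hd : Commute d (x * d * x⁻¹)) (k : ℕ) : (d ^ k * x) ^ 3 = 1 := by
  rw [mul_pow_three_eq_conj_mul _ hx] at hdx ⊢
  rw [← conj_pow, ← conj_pow, ← hd.mul_pow, eq_inv_of_mul_eq_one_right hdx, inv_pow,
    mul_inv_cancel]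

theorem commute_conj_of_commute_mul_conj {u : G} (hdu : Commute d u)
    (h : Commute d (u * x * e * (u * x)⁻¹)) : Commute d (x * e * x⁻¹) := by
  have hd : d = u * d * u⁻¹ := by rw [← hdu.eq, mul_inv_cancel_right]
  refine (Commute.conj_iff u).mp ?_
  rw [← hd]
  simpa only [mul_inv_rev, mul_assoc] using h

/-- The coset `Cx` consists of cube roots of the identity. -/
def IsCubeCoset (C : Subgroup G) (x : G) : Prop :=
  ∀ c ∈ C, (c * x) ^ 3 = 1

variable {C D : Subgroup G} {p q : ℕ} [Fact p.Prime] [Fact q.Prime]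

namespace IsCubeCoset

theorem pow_three_eq_one (h : IsCubeCoset C x) : x ^ 3 = 1 := by
  simpa using h 1 C.one_mem

theorem mul_left (h : IsCubeCoset C x) {c : G} (hc : c ∈ C) : IsCubeCoset C (c * x) :=
  fun b hb => by simpa only [mul_assoc] using h (b * c) (C.mul_mem hb hc)

theorem of_mul_left {c : G} (hc : c ∈ C) (h : IsCubeCoset C (c * x)) : IsCubeCoset C x := by
  simpa using h.mul_left (C.inv_mem hc)

theorem commute_conj (h : IsCubeCoset C x) (hd : d ∈ C) (he : e ∈ C) (hde : Commute d e) :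
    Commute d (x * e * x⁻¹) :=
  commute_conj_of_pow_three_eq_one hde h.pow_three_eq_one (h d hd) (h e he)
    (h _ (C.mul_mem hd he))

end IsCubeCoset

theorem exists_pow_eq_of_card_eq_prime (hC : Nat.card C = p) (hd : d ∈ C) (hd1 : d ≠ 1)
    (he : e ∈ C) : ∃ k : ℕ, d ^ k = e := by
  obtain ⟨k, hk⟩ := mem_powers_of_prime_card (g := (⟨d, hd⟩ : C)) (g' := ⟨e, he⟩) hC
    fun h => hd1 (congrArg Subtype.val h)
  exact ⟨k, congrArg Subtype.val hk⟩

theorem commute_conj_of_rectangle (hC : Nat.card C = p) (hD : Nat.card D = q) (hd : d ∈ C)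
    (hd1 : d ≠ 1) (he : e ∈ D) (he1 : e ≠ 1) (hde : Commute d e) (hx : x ^ 3 = 1)
    (hdx : (d * x) ^ 3 = 1) (hex : (e * x) ^ 3 = 1) (hdex : (d * e * x) ^ 3 = 1)
    {a b : G} (ha : a ∈ C) (hb : b ∈ D) : Commute a (x * b * x⁻¹) := by
  obtain ⟨k, rfl⟩ := exists_pow_eq_of_card_eq_prime hC hd hd1 ha
  obtain ⟨l, rfl⟩ := exists_pow_eq_of_card_eq_prime hD he he1 hb
  rw [← conj_pow]
  exact (commute_conj_of_pow_three_eq_one hde hx hdx hex hdex).pow_pow k l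

theorem isCubeCoset_of_rectangle (hC : Nat.card C = p) (hd : d ∈ C) (hd1 : d ≠ 1) (he : e ∈ C)
    (he1 : e ≠ 1) (hx : x ^ 3 = 1) (hdx : (d * x) ^ 3 = 1) (hex : (e * x) ^ 3 = 1)
    (hdex : (d * e * x) ^ 3 = 1) : IsCubeCoset C x := by
  intro c hc
  obtain ⟨l, rfl⟩ := exists_pow_eq_of_card_eq_prime hC hd hd1 he
  obtain ⟨k, rfl⟩ := exists_pow_eq_of_card_eq_prime hC hd hd1 hc
  exact pow_mul_pow_three_eq_one hx hdx (commute_conj_of_rectangle hC hC hd hd1 he he1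
    (Commute.self_pow d l) hx hdx hex hdex hd hd) k

end Cubes

/-! ### Collapsing relations -/

section Collapse

variable {G X : Type*} [Group G] [MulAction G X] {g x : G} {c : X}

-- These are Todd-Coxeter enumerations of the cosets of `⟨g⟩`: the listed instances of the relators
-- force the enumeration to collapse to the single coset `c`.
theorem smul_eq_self_of_relations_five (hc : g • c = c) (hg : g ^ 5 = 1) (h0 : x ^ 3 = 1)
    (h1 : (g * x) ^ 3 = 1) (h2 : (g ^ 2 * x) ^ 4 = 1) (h3 : (g⁻¹ ^ 2 * x) ^ 4 = 1)
    (h4 : (g⁻¹ * x) ^ 4 = 1) : x • c = c := by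
  have act {u : G} (hu : u = 1) (y : X) : u • y = y := by rw [hu, one_smul]
  have hcancel := smul_inv_smul (α := X) g
  have hcancel' := inv_smul_smul (α := X) g
  have h0a := act h0
  have h1a := act h1 (g⁻¹ • g⁻¹ • g⁻¹ • x • x • c)
  have h1b := act h1 (x • x • g • x • c)
  have h1c := act h1 (x • g⁻¹ • x • c)
  have h1d := act h1 (x • x • g⁻¹ • x • c)
  have h1e := act h1 (x • x • c)
  have h2a := act h2 (x • x • g⁻¹ • x • c)
  have h2b := act h2 (x • x • c)
  have h3a := act h3 (x • g • x • c)
  have h4a := act h4 (x • g⁻¹ • g⁻¹ • x • x • c)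
  have h4b := act h4 (x • g⁻¹ • x • c)
  have h4c := act h4 c
  have hga := act hg (x • x • c)
  clear h0 h1 h2 h3 h4 hg act
  simp only [pow_succ, pow_zero, one_mul, mul_smul] at *
  grind

theorem smul_eq_self_of_relations_seven (hc : g • c = c) (hg : g ^ 7 = 1) (h0 : x ^ 3 = 1)
    (h1 : (g * x) ^ 3 = 1) (h2 : (g ^ 2 * x) ^ 4 = 1) (h3 : (g ^ 3 * x) ^ 3 = 1)
    (h4 : (g⁻¹ ^ 3 * x) ^ 4 = 1) (h6 : (g⁻¹ * x) ^ 4 = 1) : x • c = c := by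
  have act {u : G} (hu : u = 1) (y : X) : u • y = y := by rw [hu, one_smul]
  have hcancel := smul_inv_smul (α := X) g
  have hcancel' := inv_smul_smul (α := X) g
  have h0a := act h0
  have h1a := act h1 (g • x • x • c)
  have h1b := act h1 (g⁻¹ • x • c)
  have h1c := act h1 c
  have h2a := act h2 c
  have h3a := act h3 (x • g⁻¹ • x • c)
  have h3b := act h3 (g • x • x • c)
  have h3c := act h3 (g • x • c)
  have h3d := act h3 c
  have h4a := act h4 (g • x • x • c)
  have h4b := act h4 (g • x • c)
  have h6a := act h6 (g⁻¹ • x • c)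
  have hga := act hg (x • x • g⁻¹ • x • c)
  have hgb := act hg (g • x • x • c)
  have hgc := act hg (g⁻¹ • x • c)
  clear h0 h1 h2 h3 h4 hg h6 act
  simp only [pow_succ, pow_zero, one_mul, mul_smul] at *
  grind

theorem eq_one_of_fixes_quotient_zpowers {n : ℕ} (hn : Nat.Coprime n 3) (hg : g ^ n = 1)
    (hx : x ^ 3 = 1) (hgx : (g * x) ^ 3 = 1)
    (hfix : ∀ c : G ⧸ Subgroup.zpowers g, g • c = c → x • c = c) : g = 1 := by
  have eq_one {y : G} (hyn : y ^ n = 1) (hy : y ^ 3 = 1) : y = 1 := by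
    simpa [hn.gcd_eq_one] using pow_gcd_eq_one.mpr ⟨hyn, hy⟩
  have hmem : x ∈ Subgroup.zpowers g := by
    have hg_mem := Subgroup.mem_zpowers g
    rw [← MulAction.stabilizer_quotient (Subgroup.zpowers g)] at hg_mem ⊢
    exact hfix _ hg_mem
  obtain ⟨k, rfl⟩ := Subgroup.mem_zpowers_iff.mp hmem
  have hx1 : g ^ k = 1 := eq_one (by rw [← zpow_natCast, zpow_comm, zpow_natCast, hg, one_zpow]) hx
  rw [hx1, mul_one] at hgx
  exact eq_one hg hgx

theorem inv_pow_eq_pow_of_pow_add_eq_one {m n : ℕ} (h : g ^ (m + n) = 1) : g⁻¹ ^ m = g ^ n := by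
  rw [inv_pow, inv_eq_of_mul_eq_one_right (by rw [← pow_add, h])]

theorem eq_one_of_relations_five (hg : g ^ 5 = 1) (h0 : x ^ 3 = 1) (h1 : (g * x) ^ 3 = 1)
    (h2 : (g ^ 2 * x) ^ 4 = 1) (h3 : (g ^ 3 * x) ^ 4 = 1) (h4 : (g ^ 4 * x) ^ 4 = 1) : g = 1 := by
  rw [← inv_pow_eq_pow_of_pow_add_eq_one (m := 2) (n := 3) hg] at h3
  rw [← inv_pow_eq_pow_of_pow_add_eq_one (m := 1) (n := 4) hg, pow_one] at h4
  exact eq_one_of_fixes_quotient_zpowers (by norm_num) hg h0 h1 fun _ hc =>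
    smul_eq_self_of_relations_five hc hg h0 h1 h2 h3 h4

theorem eq_one_of_relations_seven (hg : g ^ 7 = 1) (h0 : x ^ 3 = 1) (h1 : (g * x) ^ 3 = 1)
    (h2 : (g ^ 2 * x) ^ 4 = 1) (h3 : (g ^ 3 * x) ^ 3 = 1) (h4 : (g ^ 4 * x) ^ 4 = 1)
    (h6 : (g ^ 6 * x) ^ 4 = 1) : g = 1 := by
  rw [← inv_pow_eq_pow_of_pow_add_eq_one (m := 3) (n := 4) hg] at h4
  rw [← inv_pow_eq_pow_of_pow_add_eq_one (m := 1) (n := 6) hg, pow_one] at h6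
  exact eq_one_of_fixes_quotient_zpowers (by norm_num) hg h0 h1 fun _ hc =>
    smul_eq_self_of_relations_seven hc hg h0 h1 h2 h3 h4 h6

end Collapse

/-! ### Sidon sets -/

/-- A Sidon set in a group: no two distinct elements admit a common nontrivial left translate
into the set, that is, all quotients `b * a⁻¹` of distinct elements are distinct. -/
def IsSidon {A : Type*} [Group A] (T : Finset A) : Prop :=
  ∀ ⦃u⦄, u ≠ 1 → ∀ ⦃a⦄, a ∈ T → u * a ∈ T → ∀ ⦃b⦄, b ∈ T → u * b ∈ T → a = b

theorem pow_ne_one_of_card_eq_prime {A : Type*} [Group A] {p : ℕ} [Fact p.Prime]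
    (hA : Nat.card A = p) {u : A} (hu : u ≠ 1) {k : ℕ} (hk : k ≠ 0) (hkp : k < p) : u ^ k ≠ 1 := by
  have hu' : orderOf u = p := orderOf_eq_prime (hA ▸ pow_card_eq_one') hu
  exact pow_ne_one_of_lt_orderOf hk (hu' ▸ hkp)

namespace IsSidon

variable {A : Type*} [Group A] {T : Finset A} {a u : A}

theorem card_mul_self_lt [Fintype A] (hT : IsSidon T) :
    #T * #T < Fintype.card A + #T := by
  classical
  suffices hle : #T.offDiag ≤ #(univ.erase (1 : A)) by
    have hlt := hle.trans_lt (card_erase_lt_of_mem (mem_univ 1))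
    rw [offDiag_card, card_univ] at hlt
    lia
  refine card_le_card_of_injOn (fun r => r.2 * r.1⁻¹) (fun r hr => ?_) fun r hr s hs hrs => ?_
  · simp only [coe_offDiag, Set.mem_offDiag] at hr
    simpa [mul_inv_eq_one] using hr.2.2.symm
  · simp only [coe_offDiag, Set.mem_offDiag, mem_coe] at hr hs
    have hrs' : s.2 * s.1⁻¹ * r.1 = r.2 := by
      rw [← show r.2 * r.1⁻¹ = s.2 * s.1⁻¹ from hrs, inv_mul_cancel_right]
    have h1 : r.1 = s.1 := hT (u := s.2 * s.1⁻¹) (mul_inv_eq_one.not.mpr hs.2.2.symm) hr.1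
      (hrs' ▸ hr.2.1) hs.1 (by simpa using hs.2.1)
    exact Prod.ext h1 (by simpa [h1] using hrs)

theorem sq_mul_notMem (hT : IsSidon T) (hu : u ≠ 1) (ha : a ∈ T) (hua : u * a ∈ T) :
    u * (u * a) ∉ T :=
  fun h => hu (by simpa using hT hu ha hua hua h)

-- Writing the elements as `a`, `ua`, `uᵏa`, the exponents `k = 2, 4, 6` give a progression.
theorem exists_perfect_difference_triple (hA : Nat.card A = 7) (hT : IsSidon T)
    (hcard : #T = 3) : ∃ u ≠ 1, ∃ a ∈ T, u * a ∈ T ∧ u ^ 3 * a ∈ T := by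
  classical
  have : Fact (Nat.Prime 7) := ⟨by norm_num⟩
  obtain ⟨a, b, c, hab, hac, hbc, rfl⟩ := card_eq_three.mp hcard
  obtain ⟨u, rfl⟩ : ∃ u, b = u * a := ⟨b * a⁻¹, by simp⟩
  have hu : u ≠ 1 := by rintro rfl; simp at hab
  have hu7 : u ^ 7 = 1 := hA ▸ pow_card_eq_one'
  obtain ⟨k, hk, hkc⟩ : ∃ k < 7, u ^ k * a = c := by
    obtain ⟨n, hn⟩ := mem_powers_of_prime_card (g' := c * a⁻¹) hA hu
    refine ⟨n % 7, Nat.mod_lt _ (by norm_num), ?_⟩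
    rw [← pow_eq_pow_mod n hu7]
    simp [show u ^ n = c * a⁻¹ from hn]
  have hu3 : u ^ 3 ≠ 1 := pow_ne_one_of_card_eq_prime hA hu (by norm_num) (by norm_num)
  subst hkc
  interval_cases k
  · simp at hac
  · simp at hbc
  · refine absurd ?_ (hT.sq_mul_notMem (a := a) hu (by simp) (by simp))
    simp [← mul_assoc, ← pow_two]
  · exact ⟨u, hu, a, by simp⟩
  · refine absurd ?_ (hT.sq_mul_notMem (a := u * a) hu3 (by simp)
      (by simp [← mul_assoc, ← pow_succ]))
    simp [← mul_assoc, ← pow_succ, ← pow_add, hu7]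
  · have hinv : u⁻¹ ^ 3 * (u * a) = u ^ 5 * a := by
      rw [inv_pow_eq_pow_of_pow_add_eq_one (m := 3) (n := 4) hu7, ← mul_assoc, ← pow_succ]
    exact ⟨u⁻¹, by simpa using hu, u * a, by simp, by simp, by rw [hinv]; simp⟩
  · refine absurd ?_ (hT.sq_mul_notMem (a := u ^ 6 * a) hu (by simp)
      (by simp [← mul_assoc, ← pow_succ', hu7]))
    simp [← mul_assoc, ← pow_succ', hu7]

end IsSidon

theorem exists_notMem_of_card_eq_two {A : Type*} [Group A] {p : ℕ} [Fact p.Prime]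
    (hA : Nat.card A = p) {T : Finset A} (hT : #T = 2) :
    ∃ u ≠ 1, ∃ a ∈ T, u * a ∈ T ∧ ∀ k, 1 < k → k < p → u ^ k * a ∉ T := by
  classical
  obtain ⟨a, b, hab, rfl⟩ := card_eq_two.mp hT
  obtain ⟨u, rfl⟩ : ∃ u, b = u * a := ⟨b * a⁻¹, by simp⟩
  have hu : u ≠ 1 := by rintro rfl; simp at hab
  refine ⟨u, hu, a, by simp, by simp, fun k hk hkp => ?_⟩
  obtain ⟨l, rfl⟩ : ∃ l, k = l + 1 := ⟨k - 1, by lia⟩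
  have hpow_succ := pow_ne_one_of_card_eq_prime hA hu l.succ_ne_zero hkp
  have hpow := pow_ne_one_of_card_eq_prime hA hu (k := l) (by lia) (by lia)
  rw [mem_insert, mem_singleton, mul_eq_right, mul_left_inj, pow_succ, mul_eq_right, ← pow_succ]
  exact not_or.mpr ⟨hpow_succ, hpow⟩

/-! ### Cosets of a subgroup of prime order -/

section CosetMean

variable {G : Type*} [Group G] {C H : Subgroup G} {x : G} {κ : ℚ}

/-- The average of `orderWeight` over the coset `Hx`. -/
noncomputable def cosetMeanWeight (H : Subgroup G) (x : G) : ℚ :=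
  (∑ᶠ h : H, orderWeight (h * x)) / Nat.card H

theorem cosetMeanWeight_le_iff [Fintype H] :
    cosetMeanWeight H x ≤ κ ↔ ∑ h : H, orderWeight (h * x) ≤ κ * Fintype.card H := by
  rw [cosetMeanWeight, finsum_eq_sum_of_fintype, Nat.card_eq_fintype_card,
    div_le_iff₀ (by exact_mod_cast Fintype.card_pos)]

theorem cosetMeanWeight_le_of_le [Finite G] (hCH : C ≤ H)
    (h : ∀ u ∈ H, cosetMeanWeight C (u * x) ≤ κ) : cosetMeanWeight H x ≤ κ := by
  have := Fintype.ofFinite G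
  classical
  have hmean := sum_le_sum_of_sum_translates_le (Subgroup.inclusion hCH)
    (f := fun u : H => orderWeight (u * x)) (b := fun _ => κ) fun u => by
      simpa [mul_comm κ, mul_assoc] using cosetMeanWeight_le_iff.mp (h u u.2)
  rw [cosetMeanWeight_le_iff, mul_comm]
  simpa only [sum_const, card_univ, nsmul_eq_mul] using hmean

end CosetMean

/-- The bound on the average of `orderWeight` over a coset of a subgroup of prime order `p` that
does not consist of cube roots of the identity. -/
def lineDensity (p : ℕ) : ℚ :=
  if p = 5 then 1 / 5 else if p = 7 then 2 / 7 else 4 / 13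

theorem eleven_le_of_prime {p : ℕ} (hprime : p.Prime) (hp : 5 ≤ p) (hp5 : p ≠ 5) (hp7 : p ≠ 7) :
    11 ≤ p := by
  by_contra! hlt
  interval_cases p <;> contradiction

theorem lineDensity_nonneg (p : ℕ) : 0 ≤ lineDensity p := by
  unfold lineDensity; split_ifs <;> norm_num

open Classical in
/-- The elements of `C` that translate `x` to a cube root of the identity. -/
noncomputable def cubeFinset {G : Type*} [Group G] (C : Subgroup G) [Fintype C] (x : G) :
    Finset C :=
  {c | (c * x) ^ 3 = 1}

section Line

variable {G : Type*} [Group G] {C : Subgroup G} [Fintype C] {x : G} {p : ℕ} [Fact p.Prime]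

theorem mem_cubeFinset {c : C} : c ∈ cubeFinset C x ↔ (c * x) ^ 3 = 1 := by
  simp [cubeFinset]

theorem isSidon_cubeFinset (hC : Nat.card C = p) (hx : ¬ IsCubeCoset C x) :
    IsSidon (cubeFinset C x) := by
  intro u hu a ha hua b hb hub
  simp only [mem_cubeFinset, Subgroup.coe_mul] at ha hua hb hub
  by_contra hab
  refine hx (IsCubeCoset.of_mul_left a.2 (isCubeCoset_of_rectangle hC u.2 (by simpa using hu)
    (b * a⁻¹).2 (by simpa [mul_inv_eq_one, eq_comm] using hab) ha ?_ ?_ ?_))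
  · rwa [← mul_assoc]
  · simpa [mul_assoc] using hb
  · simpa [mul_assoc] using hub

theorem exists_pow_four_ne_one_of_five (hC : Nat.card C = 5) (hT : #(cubeFinset C x) = 2) :
    ∃ c : C, (c * x) ^ 3 ≠ 1 ∧ (c * x) ^ 4 ≠ 1 := by
  have : Fact (Nat.Prime 5) := ⟨by norm_num⟩
  by_contra! hfour
  obtain ⟨u, hu, a, ha, hua, hnotMem⟩ := exists_notMem_of_card_eq_two hC hT
  simp only [mem_cubeFinset] at ha hua hnotMem
  have hpow (k : ℕ) (hk : 1 < k) (hk5 : k < 5) : ((u : G) ^ k * (a * x)) ^ 4 = 1 := by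
    simpa [mul_assoc] using hfour _ (hnotMem k hk hk5)
  have hu5 : u ^ 5 = 1 := hC ▸ pow_card_eq_one'
  exact hu (Subtype.ext (eq_one_of_relations_five (congrArg Subtype.val hu5) ha
    (by simpa [mul_assoc] using hua)
    (hpow 2 (by norm_num) (by norm_num)) (hpow 3 (by norm_num) (by norm_num))
    (hpow 4 (by norm_num) (by norm_num))))

theorem exists_pow_four_ne_one_of_seven (hC : Nat.card C = 7) (hsidon : IsSidon (cubeFinset C x))
    (hT : #(cubeFinset C x) = 3) : ∃ c : C, (c * x) ^ 3 ≠ 1 ∧ (c * x) ^ 4 ≠ 1 := by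
  have : Fact (Nat.Prime 7) := ⟨by norm_num⟩
  by_contra! hfour
  obtain ⟨u, hu, a, ha, hua, hu3a⟩ := hsidon.exists_perfect_difference_triple hC hT
  have hu3 : u ^ 3 ≠ 1 := pow_ne_one_of_card_eq_prime hC hu (by norm_num) (by norm_num)
  have hu7 : u ^ 7 = 1 := hC ▸ pow_card_eq_one'
  have hpow {k : ℕ} (hk : u ^ k * a ∉ cubeFinset C x) : ((u : G) ^ k * (a * x)) ^ 4 = 1 := by
    simpa [mul_assoc] using hfour _ (mem_cubeFinset.not.mp hk)
  have h2 : u ^ 2 * a ∉ cubeFinset C x := by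
    simpa [pow_two, mul_assoc] using hsidon.sq_mul_notMem hu ha hua
  have h4 : u ^ 4 * a ∉ cubeFinset C x := fun h =>
    hu3 (by simpa using hsidon hu ha hua hu3a (by rwa [← mul_assoc, ← pow_succ']))
  have h6 : u ^ 6 * a ∉ cubeFinset C x := fun h => by
    have hu6 : u * (u ^ 6 * a) = a := by rw [← mul_assoc, ← pow_succ', hu7, one_mul]
    exact hsidon.sq_mul_notMem hu h (by rwa [hu6]) (by rwa [hu6])
  simp only [mem_cubeFinset, Subgroup.coe_mul, Subgroup.coe_pow, mul_assoc] at ha hua hu3a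
  exact hu (Subtype.ext (eq_one_of_relations_seven (congrArg Subtype.val hu7) ha hua
    (hpow h2) hu3a (hpow h4) (hpow h6)))

open Classical in
theorem sum_orderWeight_le_of_notMem [Finite G] (hx : x ∉ C) :
    ∑ c : C, orderWeight (c * x : G) ≤
      #(cubeFinset C x) - #{c : C | (c * x) ^ 3 ≠ 1 ∧ (c * x) ^ 4 ≠ 1} := by
  rw [cubeFinset, ← sum_boole, ← sum_boole, ← sum_sub_distrib]
  refine sum_le_sum fun c _ => ?_
  have hne : (c * x : G) ≠ 1 := fun h => hx (eq_inv_of_mul_eq_one_right h ▸ C.inv_mem c.2)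
  have h1 := orderWeight_le_one hne
  by_cases h3 : (c * x : G) ^ 3 = 1
  · simpa [h3] using h1
  by_cases h4 : (c * x : G) ^ 4 = 1
  · simpa [h3, h4] using orderWeight_nonpos h3
  · simpa [h3, h4] using orderWeight_le_neg_one h3 h4

theorem sum_orderWeight_le_pred [Finite G] (hx : x ∉ C) {n : ℕ} (hn : #(cubeFinset C x) ≤ n + 1)
    (hexists : #(cubeFinset C x) = n + 1 → ∃ c : C, (c * x) ^ 3 ≠ 1 ∧ (c * x) ^ 4 ≠ 1) :
    ∑ c : C, orderWeight (c * x : G) ≤ n := by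
  classical
  refine (sum_orderWeight_le_of_notMem hx).trans ?_
  rw [sub_le_iff_le_add]
  norm_cast
  rcases hn.lt_or_eq with hlt | heq
  · lia
  · obtain ⟨c, hc⟩ := hexists heq
    have : 0 < #{c : C | (c * x) ^ 3 ≠ 1 ∧ (c * x) ^ 4 ≠ 1} :=
      card_pos.mpr ⟨c, (mem_filter_univ c).mpr hc⟩
    lia

end Line

section LineDensity

variable {G : Type*} [Group G] [Finite G] {C : Subgroup G} {x : G} {p : ℕ} [Fact p.Prime]

theorem cosetMeanWeight_nonpos_of_mem (hp : 5 ≤ p) (hC : Nat.card C = p) (hx : x ∈ C) :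
    cosetMeanWeight C x ≤ 0 := by
  have := Fintype.ofFinite C
  classical
  rw [cosetMeanWeight_le_iff, zero_mul]
  calc ∑ c : C, orderWeight (c * x : G)
      = ∑ c : C, orderWeight (c : G) :=
        Equiv.sum_comp (Equiv.mulRight (⟨x, hx⟩ : C)) fun c : C => orderWeight (c : G)
    _ = 3 + ∑ c ∈ univ.erase (1 : C), orderWeight (c : G) := by
        rw [← add_sum_erase _ _ (mem_univ (1 : C)), Subgroup.coe_one, orderWeight_one]
    _ ≤ 3 + ∑ c ∈ univ.erase (1 : C), (-1) := by
        gcongr with c hc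
        have hpow (k : ℕ) (hk : k ≠ 0) (hkp : k < p) : (c : G) ^ k ≠ 1 := by
          exact_mod_cast pow_ne_one_of_card_eq_prime hC (ne_of_mem_erase hc) hk hkp
        exact orderWeight_le_neg_one (hpow 3 (by lia) (by lia)) (hpow 4 (by lia) (by lia))
    _ = 4 - p := by
        rw [sum_const, card_erase_of_mem (mem_univ _), card_univ, ← Nat.card_eq_fintype_card, hC,
          nsmul_eq_mul, Nat.cast_sub (by lia)]
        ring
    _ ≤ 0 := by
        have : (5 : ℚ) ≤ p := by exact_mod_cast hp
        linarith

theorem cosetMeanWeight_le_lineDensity (hp : 5 ≤ p) (hC : Nat.card C = p)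
    (hx : ¬ IsCubeCoset C x) : cosetMeanWeight C x ≤ lineDensity p := by
  have := Fintype.ofFinite C
  classical
  by_cases hxC : x ∈ C
  · exact (cosetMeanWeight_nonpos_of_mem hp hC hxC).trans (lineDensity_nonneg p)
  have hsidon := isSidon_cubeFinset hC hx
  have hcard := hsidon.card_mul_self_lt
  rw [← Nat.card_eq_fintype_card, hC] at hcard
  rw [cosetMeanWeight_le_iff, ← Nat.card_eq_fintype_card, hC]
  rcases eq_or_ne p 5 with rfl | hp5
  · have hsum := sum_orderWeight_le_pred hxC (n := 1) (by nlinarith)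
      (exists_pow_four_ne_one_of_five hC)
    norm_num [lineDensity] at hsum ⊢
    exact hsum
  rcases eq_or_ne p 7 with rfl | hp7
  · have hsum := sum_orderWeight_le_pred hxC (n := 2) (by nlinarith)
      (exists_pow_four_ne_one_of_seven hC hsidon)
    norm_num [lineDensity] at hsum ⊢
    exact hsum
  have hp11 := eleven_le_of_prime Fact.out hp hp5 hp7
  have hT : 13 * #(cubeFinset C x) ≤ 4 * p := by
    rcases le_or_gt #(cubeFinset C x) 3 with h | h
    · lia
    · nlinarith
  have hTq : (13 : ℚ) * #(cubeFinset C x) ≤ 4 * p := by exact_mod_cast hT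
  have hsum := sum_orderWeight_le_of_notMem hxC
  rw [lineDensity, if_neg hp5, if_neg hp7]
  linarith [Nat.cast_nonneg (α := ℚ) #{c : C | (c * x) ^ 3 ≠ 1 ∧ (c * x) ^ 4 ≠ 1}]

end LineDensity

/-! ### Cosets of a maximal elementary abelian subgroup -/

section ElementaryAbelian

variable {G : Type*} [Group G] {A B H : Subgroup G} {p : ℕ}

theorem mem_sup_iff_of_forall_commute (h : ∀ a ∈ A, ∀ b ∈ B, Commute a b) {y : G} :
    y ∈ A ⊔ B ↔ ∃ a ∈ A, ∃ b ∈ B, a * b = y := by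
  have hle : A ≤ Subgroup.normalizer B := fun a ha =>
    Subgroup.centralizer_le_normalizer _ (Subgroup.mem_centralizer_iff.mpr fun b hb =>
      (h a ha b hb).eq.symm)
  rw [← SetLike.mem_coe, Subgroup.coe_mul_of_left_le_normalizer_right A B hle]
  rfl

/-- `H` is an elementary abelian `p`-group, possibly trivial. -/
structure IsElementaryAbelian (p : ℕ) (H : Subgroup G) : Prop where
  pow_eq_one : ∀ h ∈ H, h ^ p = 1
  commute : ∀ a ∈ H, ∀ b ∈ H, Commute a b

theorem isElementaryAbelian_zpowers {d : G} (hd : d ^ p = 1) :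
    IsElementaryAbelian p (Subgroup.zpowers d) where
  pow_eq_one := by
    rintro _ ⟨k, rfl⟩
    change (d ^ k) ^ p = 1
    rw [← zpow_natCast, zpow_comm, zpow_natCast, hd, one_zpow]
  commute := by
    rintro _ ⟨k, rfl⟩ _ ⟨l, rfl⟩
    exact (Commute.refl d).zpow_zpow k l

namespace IsElementaryAbelian

theorem isPGroup (hH : IsElementaryAbelian p H) : IsPGroup p H :=
  fun h => ⟨1, Subtype.ext (by simpa using hH.pow_eq_one h h.2)⟩

theorem map (hH : IsElementaryAbelian p H) {K : Type*} [Group K] (f : G →* K) :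
    IsElementaryAbelian p (H.map f) where
  pow_eq_one := by
    rintro _ ⟨h, hh, rfl⟩
    rw [← map_pow, hH.pow_eq_one h hh, map_one]
  commute := by
    rintro _ ⟨a, ha, rfl⟩ _ ⟨b, hb, rfl⟩
    exact (hH.commute a ha b hb).map f

theorem sup (hA : IsElementaryAbelian p A) (hB : IsElementaryAbelian p B)
    (h : ∀ a ∈ A, ∀ b ∈ B, Commute a b) : IsElementaryAbelian p (A ⊔ B) where
  pow_eq_one y hy := by
    obtain ⟨a, ha, b, hb, rfl⟩ := (mem_sup_iff_of_forall_commute h).mp hy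
    rw [(h a ha b hb).mul_pow, hA.pow_eq_one a ha, hB.pow_eq_one b hb, one_mul]
  commute y hy z hz := by
    obtain ⟨a, ha, b, hb, rfl⟩ := (mem_sup_iff_of_forall_commute h).mp hy
    obtain ⟨a', ha', b', hb', rfl⟩ := (mem_sup_iff_of_forall_commute h).mp hz
    exact ((hA.commute a ha a' ha').mul_right (h a ha b' hb')).mul_left
      ((h a' ha' b hb).symm.mul_right (hB.commute b hb b' hb'))

end IsElementaryAbelian

theorem mem_normalizer_of_maximal_of_commute [Finite G] (hH : Maximal (IsElementaryAbelian p) H)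
    {x : G} (hcomm : ∀ d ∈ H, ∀ e ∈ H, Commute d (x * e * x⁻¹)) :
    x ∈ Subgroup.normalizer (H : Set G) := by
  set K := H.map (MulAut.conj x).toMonoidHom
  have hsup : IsElementaryAbelian p (H ⊔ K) := hH.prop.sup (hH.prop.map _) (by
    rintro a ha _ ⟨b, hb, rfl⟩
    exact hcomm a ha b hb)
  have hKH : K ≤ H := le_sup_right.trans (hH.le_of_ge hsup le_sup_left)
  exact Subgroup.mem_normalizer_fintype fun h hh => hKH ⟨h, hh, rfl⟩

end ElementaryAbelian

section Plane

variable {G : Type*} [Group G] {d e x z : G} {p : ℕ} [Fact p.Prime]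

theorem commute_conj_of_isCubeCoset_three (hp : p ≠ 2) (hd : orderOf d = p) (he : orderOf e = p)
    (hde : Commute d e) (hdz : IsCubeCoset (Subgroup.zpowers d) z)
    (hez : IsCubeCoset (Subgroup.zpowers e) z) {a : G} (ha : a ∈ Subgroup.zpowers d)
    (hdez : IsCubeCoset (Subgroup.zpowers (d * e)) (a * z)) : Commute d (z * e * z⁻¹) := by
  have hprime : p.Prime := Fact.out
  have hd1 : d ≠ 1 := by rintro rfl; exact hprime.ne_one (hd ▸ orderOf_one)
  obtain ⟨k, hda, hek⟩ : ∃ k : ℕ, d ^ k * a ≠ 1 ∧ e ^ k ≠ 1 := by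
    by_cases h : d ^ 1 * a = 1
    · refine ⟨2, ?_, pow_ne_one_of_lt_orderOf two_ne_zero ?_⟩
      · rwa [pow_succ', mul_assoc, h, mul_one]
      · exact he ▸ hprime.two_le.lt_of_ne' hp
    · exact ⟨1, h, pow_ne_one_of_lt_orderOf one_ne_zero (he ▸ hprime.one_lt)⟩
  have hdmem : d ^ k * a ∈ Subgroup.zpowers d := mul_mem (Subgroup.npow_mem_zpowers d k) ha
  have hemem := Subgroup.npow_mem_zpowers e k
  have hae : Commute a (e ^ k) := by
    obtain ⟨m, rfl⟩ := ha
    exact (hde.zpow_left m).pow_right k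
  refine commute_conj_of_rectangle ((Nat.card_zpowers d).trans hd) ((Nat.card_zpowers e).trans he)
    hdmem hda hemem hek ((hde.pow_pow k k).mul_left hae) hdz.pow_three_eq_one (hdz _ hdmem)
    (hez _ hemem) ?_ (Subgroup.mem_zpowers d) (Subgroup.mem_zpowers e)
  have hcube := hdez _ (Subgroup.npow_mem_zpowers (d * e) k)
  rwa [hde.mul_pow, mul_assoc (d ^ k), ← mul_assoc (e ^ k), ← hae.eq, ← mul_assoc, ← mul_assoc]
    at hcube

theorem exists_isCubeCoset_and_isCubeCoset {A B : Subgroup G}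
    (hcomm : ∀ a ∈ A, ∀ b ∈ B, Commute a b) {u v : G} (hu : u ∈ A ⊔ B) (hv : v ∈ A ⊔ B)
    (hA : IsCubeCoset A (u * x)) (hB : IsCubeCoset B (v * x)) :
    ∃ w ∈ A ⊔ B, IsCubeCoset A (w * x) ∧ IsCubeCoset B (w * x) := by
  obtain ⟨a, ha, b, hb, rfl⟩ := (mem_sup_iff_of_forall_commute hcomm).mp hu
  obtain ⟨a', ha', b', hb', rfl⟩ := (mem_sup_iff_of_forall_commute hcomm).mp hv
  refine ⟨a' * b, mul_mem (Subgroup.mem_sup_left ha') (Subgroup.mem_sup_right hb), ?_, ?_⟩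
  · rw [mul_assoc] at hA ⊢
    exact (hA.of_mul_left ha).mul_left ha'
  · rw [(hcomm a' ha' b' hb').eq, mul_assoc] at hB
    rw [(hcomm a' ha' b hb).eq, mul_assoc]
    exact (hB.of_mul_left hb').mul_left hb

theorem commute_of_mem_zpowers (hde : Commute d e) {a b : G} (ha : a ∈ Subgroup.zpowers d)
    (hb : b ∈ Subgroup.zpowers e) : Commute a b := by
  obtain ⟨k, rfl⟩ := ha
  obtain ⟨l, rfl⟩ := hb
  exact hde.zpow_zpow k l

theorem exists_mul_eq_of_mem_sup_zpowers (hde : Commute d e) {u : G}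
    (hu : u ∈ Subgroup.zpowers d ⊔ Subgroup.zpowers e) :
    ∃ f ∈ Subgroup.zpowers (d * e), ∃ a ∈ Subgroup.zpowers d, f * a = u := by
  obtain ⟨_, ⟨i, rfl⟩, _, ⟨j, rfl⟩, rfl⟩ :=
    (mem_sup_iff_of_forall_commute fun _ ha _ hb => commute_of_mem_zpowers hde ha hb).mp hu
  refine ⟨(d * e) ^ j, ⟨j, rfl⟩, d ^ (i - j), ⟨i - j, rfl⟩, ?_⟩
  rw [hde.mul_zpow, mul_assoc, ← (hde.zpow_zpow (i - j) j).eq, ← mul_assoc, ← zpow_add,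
    add_sub_cancel]

-- In the plane `Px`, with `P = ⟨d, e⟩`, a row and a column of cubes meet, and a diagonal of cubes
-- completes a rectangle with them.
theorem exists_forall_not_isCubeCoset_zpowers (hp : p ≠ 2) (hd : d ^ p = 1) (he : e ^ p = 1)
    (hde : Commute d e) (hx : ¬ Commute d (x * e * x⁻¹)) :
    ∃ c ∈ Subgroup.zpowers d ⊔ Subgroup.zpowers e, c ≠ 1 ∧
      ∀ u ∈ Subgroup.zpowers d ⊔ Subgroup.zpowers e,
        ¬ IsCubeCoset (Subgroup.zpowers c) (u * x) := by
  have hdmem := Subgroup.mem_sup_left (T := Subgroup.zpowers e) (Subgroup.mem_zpowers d)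
  have hemem := Subgroup.mem_sup_right (S := Subgroup.zpowers d) (Subgroup.mem_zpowers e)
  have hd1 : d ≠ 1 := by rintro rfl; exact hx (Commute.one_left _)
  have he1 : e ≠ 1 := by rintro rfl; exact hx (by simp)
  by_contra! hfull
  obtain ⟨u, hu, hdu⟩ := hfull d hdmem hd1
  obtain ⟨v, hv, hev⟩ := hfull e hemem he1
  have hcomm := fun a ha b hb => commute_of_mem_zpowers hde (a := a) (b := b) ha hb
  obtain ⟨w, hw, hdw, hew⟩ := exists_isCubeCoset_and_isCubeCoset hcomm hu hv hdu hev
  have hdw' : Commute d w := by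
    obtain ⟨a, ha, b, hb, rfl⟩ := (mem_sup_iff_of_forall_commute hcomm).mp hw
    exact (commute_of_mem_zpowers (.refl d) (Subgroup.mem_zpowers d) ha).mul_right
      (hcomm d (Subgroup.mem_zpowers d) b hb)
  refine hx (commute_conj_of_commute_mul_conj hdw' ?_)
  by_cases hde1 : d * e = 1
  · have hemem' : e ∈ Subgroup.zpowers d := by
      rw [← inv_eq_of_mul_eq_one_right hde1]
      exact inv_mem (Subgroup.mem_zpowers d)
    exact hdw.commute_conj (Subgroup.mem_zpowers d) hemem' hde
  obtain ⟨t, ht, hdet⟩ := hfull (d * e) (mul_mem hdmem hemem) hde1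
  obtain ⟨f, hf, a, ha, hfa⟩ := exists_mul_eq_of_mem_sup_zpowers hde (mul_mem ht (inv_mem hw))
  rw [show t * x = f * (a * (w * x)) by rw [← mul_assoc f, hfa]; group] at hdet
  exact commute_conj_of_isCubeCoset_three hp (orderOf_eq_prime hd hd1) (orderOf_eq_prime he he1)
    hde hdw hew ha (hdet.of_mul_left hf)

end Plane

section MaximalCoset

variable {G : Type*} [Group G] {H : Subgroup G} {x : G} {p : ℕ}

theorem IsElementaryAbelian.mul_pow_three_eq (hH : IsElementaryAbelian p H) {y c h : G}
    (hy : y ∈ Subgroup.normalizer (H : Set G)) (hc : c ∈ H) (hh : h ∈ H) (hy3 : y ^ 3 = 1)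
    (hhy3 : (h * y) ^ 3 = 1) : (c * (h * y)) ^ 3 = (c * y) ^ 3 := by
  have hconj {b : G} (hb : b ∈ H) : h * y * b * (h * y)⁻¹ = y * b * y⁻¹ := by
    have hyb : y * b * y⁻¹ ∈ H := (Subgroup.mem_normalizer_iff.mp hy b).mp hb
    rw [show h * y * b * (h * y)⁻¹ = h * (y * b * y⁻¹) * h⁻¹ by group,
      (hH.commute h hh _ hyb).eq, mul_inv_cancel_right]
  rw [mul_pow_three_eq_conj_mul _ hy3, mul_pow_three_eq_conj_mul _ hhy3, hconj hc,
    hconj ((Subgroup.mem_normalizer_iff.mp hy c).mp hc)]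

theorem exists_forall_not_isCubeCoset_of_mem_normalizer (hH : IsElementaryAbelian p H)
    (hne : H ≠ ⊥) (hx : x ∈ Subgroup.normalizer (H : Set G)) (hcube : ¬ IsCubeCoset H x) :
    ∃ c ∈ H, c ≠ 1 ∧ ∀ u ∈ H, ¬ IsCubeCoset (Subgroup.zpowers c) (u * x) := by
  by_contra! hfull
  obtain ⟨g, hg, hg1⟩ := H.bot_or_exists_ne_one.resolve_left hne
  obtain ⟨u, hu, hgu⟩ := hfull g hg hg1
  have hux : u * x ∈ Subgroup.normalizer (H : Set G) := mul_mem (Subgroup.le_normalizer hu) hx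
  refine hcube (IsCubeCoset.of_mul_left hu fun c hc => ?_)
  by_cases hc1 : c = 1
  · rw [hc1, one_mul]
    exact hgu.pow_three_eq_one
  obtain ⟨v, hv, hcv⟩ := hfull c hc hc1
  rw [show v * x = v * u⁻¹ * (u * x) by group] at hcv
  rw [← hH.mul_pow_three_eq hux hc (mul_mem hv (inv_mem hu)) hgu.pow_three_eq_one
    hcv.pow_three_eq_one]
  exact hcv c (Subgroup.mem_zpowers c)

variable [Fact p.Prime]

theorem cosetMeanWeight_le_of_forall_not_isCubeCoset [Finite G] (hp : 5 ≤ p) {P : Subgroup G}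
    (hP : ∀ u ∈ P, u ^ p = 1) {c : G} (hc : c ∈ P) (hc1 : c ≠ 1)
    (hcube : ∀ u ∈ P, ¬ IsCubeCoset (Subgroup.zpowers c) (u * x)) :
    cosetMeanWeight P x ≤ lineDensity p :=
  cosetMeanWeight_le_of_le (Subgroup.zpowers_le.mpr hc) fun u hu =>
    cosetMeanWeight_le_lineDensity hp
      ((Nat.card_zpowers c).trans (orderOf_eq_prime (hP c hc) hc1)) (hcube u hu)

theorem cosetMeanWeight_le_of_not_commute [Finite G] (hp : 5 ≤ p) (hH : IsElementaryAbelian p H)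
    {d e : G} (hd : d ∈ H) (he : e ∈ H) (hx : ¬ Commute d (x * e * x⁻¹)) :
    cosetMeanWeight H x ≤ lineDensity p := by
  have hde := hH.commute d hd e he
  have hplane : Subgroup.zpowers d ⊔ Subgroup.zpowers e ≤ H :=
    sup_le (Subgroup.zpowers_le.mpr hd) (Subgroup.zpowers_le.mpr he)
  refine cosetMeanWeight_le_of_le hplane fun u hu => ?_
  obtain ⟨c, hc, hc1, hcube⟩ := exists_forall_not_isCubeCoset_zpowers (x := u * x)
    (by lia) (hH.pow_eq_one d hd) (hH.pow_eq_one e he) hde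
    fun h => hx (commute_conj_of_commute_mul_conj (hH.commute d hd u hu) h)
  exact cosetMeanWeight_le_of_forall_not_isCubeCoset hp
    (fun v hv => hH.pow_eq_one v (hplane hv)) hc hc1 hcube

/-- The union of the cosets of `H` in its normalizer that consist of cube roots of the identity;
these are the only cosets of a maximal elementary abelian `H` that may have a large mean weight. -/
def exceptionalSet (H : Subgroup G) : Set G :=
  {x | x ∈ Subgroup.normalizer (H : Set G) ∧ IsCubeCoset H x}

theorem cosetMeanWeight_le_of_maximal [Finite G] (hp : 5 ≤ p)
    (hH : Maximal (IsElementaryAbelian p) H) (hne : H ≠ ⊥)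
    (hx : x ∉ exceptionalSet H) :
    cosetMeanWeight H x ≤ lineDensity p := by
  by_cases hcomm : ∀ d ∈ H, ∀ e ∈ H, Commute d (x * e * x⁻¹)
  · have hxN := mem_normalizer_of_maximal_of_commute hH hcomm
    obtain ⟨c, hc, hc1, hcube⟩ := exists_forall_not_isCubeCoset_of_mem_normalizer hH.prop hne hxN
      fun h => hx ⟨hxN, h⟩
    exact cosetMeanWeight_le_of_forall_not_isCubeCoset hp hH.prop.pow_eq_one hc hc1 hcube
  · push Not at hcomm
    obtain ⟨d, hd, e, he, hde⟩ := hcomm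
    exact cosetMeanWeight_le_of_not_commute hp hH.prop hd he hde

end MaximalCoset

/-! ### The exceptional set -/

theorem eq_one_of_pow_eq_one_of_coprime {G : Type*} [Group G] {g : G} {m n : ℕ}
    (hmn : m.Coprime n) (hm : g ^ m = 1) (hn : g ^ n = 1) : g = 1 := by
  rw [← pow_one g, ← hmn.gcd_eq_one]
  exact pow_gcd_eq_one.mpr ⟨hm, hn⟩

theorem three_mul_ncard_le_of_forall_notMem {A : Type*} [Group A] [Finite A] {S : Set A} (y : A)
    (h : ∀ x ∈ S, y * x ∈ S → y⁻¹ * x ∉ S) : 3 * S.ncard ≤ 2 * Nat.card A := by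
  classical
  have := Fintype.ofFinite A
  have hmean := sum_le_sum_of_sum_translates_le ![1, y, y⁻¹]
    (f := fun x => if x ∈ S then 1 else 0) (b := fun _ => 2 / 3) fun x => by
      specialize h x
      simp only [Fin.sum_univ_three, Matrix.cons_val, one_mul, Fintype.card_fin]
      by_cases h₀ : x ∈ S <;> by_cases h₁ : y * x ∈ S <;> by_cases h₂ : y⁻¹ * x ∈ S <;>
        simp_all <;> norm_num
  rw [sum_boole, sum_const, card_univ, nsmul_eq_mul, Set.filter_mem_univ_eq_toFinset,
    ← Set.ncard_eq_toFinset_card'] at hmean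
  rw [Nat.card_eq_fintype_card]
  exact_mod_cast (by linarith : (3 : ℚ) * S.ncard ≤ 2 * Fintype.card A)

section ExceptionalSet

variable {G : Type*} [Group G] {H : Subgroup G} {x y : G} {p : ℕ} [Fact p.Prime]

theorem eq_one_of_commute_of_isCubeCoset (hp : p ≠ 3) (hH : IsElementaryAbelian p H)
    (hy : IsCubeCoset H y) {c : G} (hc : c ∈ H) (hyc : Commute y c) : c = 1 := by
  have hc3 : c ^ 3 = 1 := by
    simpa [hyc.symm.mul_pow, hy.pow_three_eq_one] using hy c hc
  exact eq_one_of_pow_eq_one_of_coprime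
    ((Nat.coprime_primes Nat.prime_three Fact.out).mpr hp.symm) hc3 (hH.pow_eq_one c hc)

theorem notMem_of_isCubeCoset (hp : p ≠ 3) (hH : IsElementaryAbelian p H) (hne : H ≠ ⊥)
    (hx : IsCubeCoset H x) : x ∉ H := fun hxH =>
  hne (H.eq_bot_iff_forall.mpr fun c hc =>
    eq_one_of_commute_of_isCubeCoset hp hH hx hc (hH.commute x hxH c hc))

theorem cosetMeanWeight_le_one_of_notMem [Finite G] (hx : x ∉ H) : cosetMeanWeight H x ≤ 1 := by
  have := Fintype.ofFinite H
  rw [cosetMeanWeight_le_iff, one_mul, ← nsmul_one, ← card_univ]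
  refine sum_le_card_nsmul _ _ _ fun h _ => orderWeight_le_one fun hhx => hx ?_
  exact eq_inv_of_mul_eq_one_right hhx ▸ H.inv_mem h.2

theorem sum_orderWeight_le_of_maximal [Fintype G] (hp : 5 ≤ p)
    (hH : Maximal (IsElementaryAbelian p) H) (hne : H ≠ ⊥) :
    ∑ x : G, orderWeight x ≤
      lineDensity p * Fintype.card G + (1 - lineDensity p) * (exceptionalSet H).ncard := by
  classical
  calc ∑ x : G, orderWeight x
      ≤ ∑ x : G, (lineDensity p + (1 - lineDensity p) * if x ∈ exceptionalSet H then 1 else 0) := by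
        refine sum_le_sum_of_sum_translates_le (fun h : H => (h : G)) fun x => ?_
        rw [mul_comm, ← cosetMeanWeight_le_iff]
        split_ifs with hx
        · simpa using cosetMeanWeight_le_one_of_notMem
            (notMem_of_isCubeCoset (by lia) hH.prop hne hx.2)
        · simpa using cosetMeanWeight_le_of_maximal hp hH hne hx
    _ = _ := by
        rw [sum_add_distrib, ← mul_sum, sum_boole, sum_const, card_univ, nsmul_eq_mul, mul_comm,
          Set.filter_mem_univ_eq_toFinset, ← Set.ncard_eq_toFinset_card']

theorem commute_conj_of_mem_exceptionalSet (hy : y ∈ Subgroup.normalizer (H : Set G))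
    (hx : IsCubeCoset H x) (hyx : IsCubeCoset H (y * x)) (hyx' : IsCubeCoset H (y⁻¹ * x)) {h : G}
    (hh : h ∈ H) : Commute y (h * x * y * (h * x)⁻¹) := by
  have hshift {z : G} (hz : z ∈ Subgroup.normalizer (H : Set G)) (hzx : IsCubeCoset H (z * x)) :
      (z * (h * x)) ^ 3 = 1 := by
    simpa [mul_assoc] using hzx _ ((Subgroup.mem_normalizer_iff.mp hz h).mp hh)
  have hinv := commute_conj_of_pow_three_eq_one (Commute.refl y).inv_right (hx h hh)
    (hshift hy hyx) (hshift (inv_mem hy) hyx') (by simpa using hx h hh)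
  simpa [mul_assoc] using hinv.inv_right

-- The conjugates of `y` by the elements of `Hx` all commute with `y`, hence so do the quotients of
-- two of them, which lie in `H`; but `y` centralizes no nontrivial element of `H`.
theorem notMem_exceptionalSet_of_mem (hp : p ≠ 3) (hH : IsElementaryAbelian p H) (hne : H ≠ ⊥)
    (hy : y ∈ exceptionalSet H) (hx : x ∈ exceptionalSet H) (hyx : y * x ∈ exceptionalSet H) :
    y⁻¹ * x ∉ exceptionalSet H := by
  intro hyx'
  have hcomm {h : G} (hh : h ∈ H) :=
    commute_conj_of_mem_exceptionalSet hy.1 hx.2 hyx.2 hyx'.2 hh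
  refine hne (H.eq_bot_iff_forall.mpr fun g hg =>
    eq_one_of_commute_of_isCubeCoset hp hH hy.2 hg ?_)
  have hconj {z : G} (hz : z ∈ Subgroup.normalizer (H : Set G)) {h : G} (hh : h ∈ H) :
      z * h * z⁻¹ ∈ H := (Subgroup.mem_normalizer_iff.mp hz h).mp hh
  have hquot : x * g * x⁻¹ * x * y * (x * g * x⁻¹ * x)⁻¹ * (1 * x * y * (1 * x)⁻¹)⁻¹ =
      x * (g * (y * g⁻¹ * y⁻¹)) * x⁻¹ := by group
  have hone := eq_one_of_commute_of_isCubeCoset hp hH hy.2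
    (hconj hx.1 (mul_mem hg (hconj hy.1 (inv_mem hg))))
    (hquot ▸ (hcomm (hconj hx.1 hg)).mul_right (hcomm H.one_mem).inv_right)
  rw [conj_eq_one_iff, ← mul_assoc, ← mul_assoc, mul_inv_eq_one, mul_inv_eq_iff_eq_mul] at hone
  exact hone.symm

theorem three_mul_ncard_exceptionalSet_le [Finite G] (hp : p ≠ 3) (hH : IsElementaryAbelian p H)
    (hne : H ≠ ⊥) :
    3 * (exceptionalSet H).ncard ≤ 2 * Nat.card (Subgroup.normalizer (H : Set G)) := by
  rcases (exceptionalSet H).eq_empty_or_nonempty with hempty | ⟨y, hy⟩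
  · simp [hempty]
  have hpre : ((Subgroup.normalizer (H : Set G)).subtype ⁻¹' exceptionalSet H).ncard =
      (exceptionalSet H).ncard :=
    Set.ncard_preimage_of_injective_subset_range Subtype.val_injective fun x hx => ⟨⟨x, hx.1⟩, rfl⟩
  rw [← hpre]
  exact three_mul_ncard_le_of_forall_notMem ⟨y, hy.1⟩ fun x hx hyx =>
    notMem_exceptionalSet_of_mem hp hH hne hy hx hyx

end ExceptionalSet

/-! ### The `p`-core and the index of normalizers -/

/-- The largest normal `p`-subgroup of `G`, usually written `O_p(G)`. -/
def pCore (p : ℕ) (G : Type*) [Group G] : Subgroup G :=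
  sSup {R | R.Normal ∧ IsPGroup p R}

section PCore

variable {G : Type*} [Group G] {p : ℕ}

theorem le_pCore {R : Subgroup G} (hR : R.Normal) (hRp : IsPGroup p R) : R ≤ pCore p G :=
  le_sSup ⟨hR, hRp⟩

instance pCore_characteristic : (pCore p G).Characteristic := by
  refine Subgroup.characteristic_iff_map_le.mpr fun φ => ?_
  rw [pCore, Subgroup.map_le_iff_le_comap]
  refine sSup_le fun R hR => Subgroup.map_le_iff_le_comap.mp ?_
  exact le_pCore (hR.1.map _ φ.surjective) (hR.2.map _)

theorem isPGroup_pCore : IsPGroup p (pCore p G) :=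
  Sylow.sSup_of_normal _ (fun _ hR => hR.2) fun _ hR => hR.1

theorem map_subtype_pCore_le {K : Subgroup G} [K.Normal] :
    (pCore p K).map K.subtype ≤ pCore p G :=
  le_pCore inferInstance (isPGroup_pCore.map _)

variable [Fact p.Prime]

theorem fixedPoints_eq_univ_of_card_le {P α : Type*} [Group P] [MulAction P α] [Finite α]
    (hP : IsPGroup p P) (hα : Nat.card α ≤ p) (hfix : (MulAction.fixedPoints P α).Nonempty) :
    MulAction.fixedPoints P α = Set.univ := by
  have hpos : 0 < Nat.card (MulAction.fixedPoints P α) :=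
    Nat.card_pos_iff.mpr ⟨hfix.to_subtype, inferInstance⟩
  have hle : Nat.card (MulAction.fixedPoints P α) ≤ Nat.card α :=
    Nat.card_le_card_of_injective _ Subtype.val_injective
  have hdvd := (Nat.modEq_iff_dvd' hle).mp (hP.card_modEq_card_fixedPoints α).symm
  have hzero := Nat.eq_zero_of_dvd_of_lt hdvd (by lia)
  rw [Set.eq_univ_iff_ncard]
  exact hle.antisymm (Nat.sub_eq_zero_iff_le.mp hzero)

variable [Finite G]

theorem le_normalCore_of_index_le {H N : Subgroup G} (hH : IsPGroup p H) (hHN : H ≤ N)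
    (hindex : N.index ≤ p) : H ≤ N.normalCore := by
  have hmem {h : H} {g : G} : h • (g : G ⧸ N) = g ↔ g⁻¹ * h⁻¹ * g ∈ N := by
    rw [Subgroup.coe_inv, ← mul_inv_rev, ← QuotientGroup.eq]
    rfl
  have hall := fixedPoints_eq_univ_of_card_le hH (α := G ⧸ N) hindex
    ⟨(1 : G), fun h => hmem.mpr (by simpa using hHN h.2)⟩
  intro h hh g
  have hfix : ((g⁻¹ : G) : G ⧸ N) ∈ MulAction.fixedPoints H (G ⧸ N) := hall ▸ Set.mem_univ _
  simpa using hmem.mp (hfix ⟨h⁻¹, H.inv_mem hh⟩)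

theorem lt_index_normalizer_of_pCore_eq_bot (hcore : pCore p G = ⊥) {H : Subgroup G}
    (hH : IsPGroup p H) (hne : H ≠ ⊥) : p < (Subgroup.normalizer (H : Set G)).index := by
  by_contra! hindex
  set K := (Subgroup.normalizer (H : Set G)).normalCore
  have hHK : H ≤ K := le_normalCore_of_index_le hH Subgroup.le_normalizer hindex
  have hnormal : (H.subgroupOf K).Normal :=
    (Subgroup.normal_subgroupOf_iff_le_normalizer hHK).mpr (Subgroup.normalCore_le _)
  refine hne (le_bot_iff.mp ?_)
  calc H = (H.subgroupOf K).map K.subtype := by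
        rw [Subgroup.subgroupOf_map_subtype, inf_eq_left.mpr hHK]
    _ ≤ (pCore p K).map K.subtype := Subgroup.map_mono (le_pCore hnormal hH.comap_subtype)
    _ ≤ pCore p G := map_subtype_pCore_le
    _ = ⊥ := hcore

end PCore

theorem exists_maximal_isElementaryAbelian_ne_bot {G : Type*} [Group G] [Finite G] {p : ℕ}
    [Fact p.Prime] (hdvd : p ∣ Nat.card G) :
    ∃ H : Subgroup G, Maximal (IsElementaryAbelian p) H ∧ H ≠ ⊥ := by
  obtain ⟨g, hg⟩ := exists_prime_orderOf_dvd_card' p hdvd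
  obtain ⟨H, hle, hH⟩ := Set.Finite.exists_le_maximal
    (Set.toFinite {K : Subgroup G | IsElementaryAbelian p K})
    (isElementaryAbelian_zpowers (hg ▸ pow_orderOf_eq_one g))
  refine ⟨H, hH, ?_⟩
  rintro rfl
  rw [Subgroup.zpowers_le, Subgroup.mem_bot] at hle
  exact (Fact.out : p.Prime).ne_one (by rw [← hg, hle, orderOf_one])

theorem meanOrderWeight_le_of_pCore_eq_bot {G : Type*} [Group G] [Fintype G] {p : ℕ}
    [Fact p.Prime] (hp : 5 ≤ p) (hdvd : p ∣ Nat.card G) (hcore : pCore p G = ⊥) :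
    meanOrderWeight G ≤ 7 / 20 := by
  obtain ⟨H, hH, hne⟩ := exists_maximal_isElementaryAbelian_ne_bot hdvd
  have hsum := sum_orderWeight_le_of_maximal hp hH hne
  have hE : 3 * (exceptionalSet H).ncard * (p + 1) ≤ (2 * Fintype.card G : ℚ) := by
    have hncard := three_mul_ncard_exceptionalSet_le (by lia : p ≠ 3) hH.prop hne
    have hindex := lt_index_normalizer_of_pCore_eq_bot hcore hH.prop.isPGroup hne
    have hcard := (Subgroup.normalizer (H : Set G)).card_mul_index
    rw [Nat.card_eq_fintype_card (α := G)] at hcard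
    exact_mod_cast (Nat.mul_le_mul hncard hindex).trans_eq (by rw [mul_assoc, hcard])
  have hE0 : (0 : ℚ) ≤ (exceptionalSet H).ncard := Nat.cast_nonneg _
  rw [meanOrderWeight, div_le_iff₀ (by exact_mod_cast Fintype.card_pos)]
  by_cases hp5 : p = 5
  · subst hp5
    norm_num [lineDensity] at hsum hE
    linarith
  by_cases hp7 : p = 7
  · subst hp7
    norm_num [lineDensity] at hsum hE
    linarith
  have hp11 : (11 : ℚ) ≤ p := by exact_mod_cast eleven_le_of_prime Fact.out hp hp5 hp7
  rw [lineDensity, if_neg hp5, if_neg hp7] at hsum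
  nlinarith

/-! ### Means of roots of unity -/

theorem norm_multiset_sum_le_card {E : Type*} [SeminormedAddCommGroup E] {s : Multiset E}
    (hs : ∀ a ∈ s, ‖a‖ = 1) : ‖s.sum‖ ≤ s.card := by
  refine (norm_multiset_sum_le s).trans_eq ?_
  rw [Multiset.map_congr rfl hs, Multiset.map_const', Multiset.sum_replicate, nsmul_one]

theorem sum_eq_norm_smul_of_card_le_norm_sum {E : Type*} [NormedAddCommGroup E] [NormedSpace ℝ E]
    [StrictConvexSpace ℝ E] {s : Multiset E} (hs : ∀ a ∈ s, ‖a‖ = 1) (hle : s.card ≤ ‖s.sum‖)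
    {a : E} (ha : a ∈ s) : s.sum = ‖s.sum‖ • a := by
  obtain ⟨t, rfl⟩ := Multiset.exists_cons_of_mem ha
  have hnorm_a : ‖a‖ = 1 := hs a ha
  have hnorm_t : ‖t.sum‖ ≤ t.card :=
    norm_multiset_sum_le_card fun b hb => hs b (Multiset.mem_cons_of_mem hb)
  rw [Multiset.card_cons, Nat.cast_succ] at hle
  rw [Multiset.sum_cons] at hle ⊢
  have hray : SameRay ℝ a t.sum :=
    sameRay_iff_norm_add.mpr (le_antisymm (norm_add_le _ _) (by linarith))
  simpa only [hnorm_a, one_smul] using ((SameRay.refl a).add_right hray).norm_smul_eq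

section NumberField

variable {K : Type*} [Field K] [NumberField K] {n : ℕ}

theorem sum_eq_zero_or_norm_map_sum_eq_card (hn : n ≠ 0) {t : Multiset K}
    (ht : ∀ b ∈ t, b ^ n = 1) (hintegral : IsIntegral ℤ (t.sum / t.card)) (φ : K →+* ℂ) :
    t.sum = 0 ∨ ‖φ t.sum‖ = t.card := by
  by_cases hzero : t.sum / t.card = 0
  · rcases div_eq_zero_iff.mp hzero with hsum | hcard
    · exact .inl hsum
    · rw [Nat.cast_eq_zero, Multiset.card_eq_zero] at hcard
      exact .inl (hcard ▸ Multiset.sum_zero)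
  right
  have hle (ψ : K →+* ℂ) : ‖ψ (t.sum / t.card)‖ ≤ 1 := by
    rw [map_div₀, map_multiset_sum, map_natCast, norm_div, Complex.norm_natCast]
    refine div_le_one_of_le₀ ?_ (Nat.cast_nonneg _)
    rw [← Multiset.card_map ψ t]
    refine norm_multiset_sum_le_card fun a ha => ?_
    obtain ⟨b, hb, rfl⟩ := Multiset.mem_map.mp ha
    exact Complex.norm_eq_one_of_pow_eq_one (by rw [← map_pow, ht b hb, map_one]) hn
  obtain ⟨m, hm, hpow⟩ := NumberField.Embeddings.pow_eq_one_of_norm_le_one K ℂ hzero hintegral hle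
  have hnorm : ‖φ (t.sum / t.card)‖ = 1 :=
    Complex.norm_eq_one_of_pow_eq_one (by rw [← map_pow, hpow, map_one]) hm.ne'
  rw [map_div₀, norm_div, map_natCast, Complex.norm_natCast] at hnorm
  exact eq_of_div_eq_one hnorm

end NumberField

theorem exists_numberField_multiset_map_eq {n : ℕ} (hn : n ≠ 0) {s : Multiset ℂ}
    (hs : ∀ a ∈ s, a ^ n = 1) :
    ∃ (K : IntermediateField ℚ ℂ) (_ : NumberField K) (t : Multiset K),
      t.map (algebraMap K ℂ) = s := by
  obtain ⟨ζ, hζ⟩ : ∃ ζ : ℂ, IsPrimitiveRoot ζ n := ⟨_, Complex.isPrimitiveRoot_exp n hn⟩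
  let K := IntermediateField.adjoin ℚ {ζ}
  have : FiniteDimensional ℚ K := IntermediateField.adjoin.finiteDimensional
    (hζ.isIntegral (Nat.pos_of_ne_zero hn)).tower_top
  have hsK : ∀ a ∈ s, a ∈ K := by
    intro a ha
    have : NeZero n := ⟨hn⟩
    obtain ⟨i, -, rfl⟩ := hζ.eq_pow_of_pow_eq_one (hs a ha)
    exact pow_mem (IntermediateField.mem_adjoin_simple_self ℚ ζ) i
  exact ⟨K, ⟨⟩, CanLift.prf s hsK⟩

-- The conjugates of the mean are again means of roots of unity, so they lie in the closed unit
-- disc; by Kronecker a nonzero mean is then itself a root of unity, and strict convexity applies.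
theorem sum_eq_zero_or_exists_forall_eq {n : ℕ} (hn : n ≠ 0) {s : Multiset ℂ}
    (hs : ∀ a ∈ s, a ^ n = 1) (hintegral : IsIntegral ℤ (s.sum / s.card)) :
    s.sum = 0 ∨ ∃ c, ∀ a ∈ s, a = c := by
  have hnorm : ∀ a ∈ s, ‖a‖ = 1 := fun a ha => Complex.norm_eq_one_of_pow_eq_one (hs a ha) hn
  obtain ⟨K, _, t, rfl⟩ := exists_numberField_multiset_map_eq hn hs
  let φ : K →+* ℂ := algebraMap K ℂ
  have ht : ∀ b ∈ t, b ^ n = 1 := fun b hb =>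
    φ.injective (by rw [map_pow, hs _ (Multiset.mem_map_of_mem φ hb), map_one])
  rw [Multiset.card_map, ← map_multiset_sum] at hintegral
  have ht_integral : IsIntegral ℤ (t.sum / t.card) := by
    rw [← isIntegral_algHom_iff φ.toIntAlgHom φ.injective]
    rwa [← map_natCast φ, ← map_div₀] at hintegral
  refine (sum_eq_zero_or_norm_map_sum_eq_card hn ht ht_integral φ).imp (fun hzero => ?_)
    fun hcard => ?_
  · rw [← map_multiset_sum, hzero, map_zero]
  · rw [map_multiset_sum] at hcard
    refine ⟨‖(t.map φ).sum‖⁻¹ • (t.map φ).sum, fun a ha => ?_⟩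
    have hne : ‖(t.map φ).sum‖ ≠ 0 := by
      rw [hcard, Nat.cast_ne_zero, ← Multiset.card_map φ]
      exact (Multiset.card_pos_iff_exists_mem.mpr ⟨a, ha⟩).ne'
    rw [eq_inv_smul_iff₀ hne]
    exact (sum_eq_norm_smul_of_card_le_norm_sum hnorm (by rw [Multiset.card_map, hcard]) ha).symm

/-! ### Matrices of finite order -/

section Matrix

variable {m : Type*} [Fintype m] [DecidableEq m]

theorem card_roots_charpoly (M : Matrix m m ℂ) : M.charpoly.roots.card = Fintype.card m := by
  rw [Polynomial.splits_iff_card_roots.mp (IsAlgClosed.splits _), Matrix.charpoly_natDegree_eq_dim]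

variable [Nonempty m] {n : ℕ}

theorem pow_eq_one_of_mem_roots_charpoly {K : Type*} [Field K] {M : Matrix m m K} (hM : M ^ n = 1)
    {a : K} (ha : a ∈ M.charpoly.roots) : a ^ n = 1 := by
  have hspec := spectrum.pow_mem_pow M n
    (Matrix.mem_spectrum_iff_isRoot_charpoly.mpr (Polynomial.isRoot_of_mem_roots ha))
  rwa [hM, spectrum.one_eq] at hspec

variable {M : Matrix m m ℂ}

theorem isIntegral_trace_of_pow_eq_one (hn : n ≠ 0) (hM : M ^ n = 1) : IsIntegral ℤ M.trace := by
  rw [Matrix.trace_eq_sum_roots_charpoly]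
  refine IsIntegral.multiset_sum fun a ha => IsIntegral.of_pow (Nat.pos_of_ne_zero hn) ?_
  rw [pow_eq_one_of_mem_roots_charpoly hM ha]
  exact isIntegral_one

theorem eq_scalar_of_pow_eq_one (hn : n ≠ 0) (hM : M ^ n = 1) {c : ℂ}
    (hc : ∀ a ∈ M.charpoly.roots, a = c) : M = Matrix.scalar m c := by
  have hcharpoly : M.charpoly = (Polynomial.X - Polynomial.C c) ^ Fintype.card m := by
    rw [(IsAlgClosed.splits M.charpoly).eq_prod_roots, (Matrix.charpoly_monic M).leadingCoeff,
      Multiset.eq_replicate.mpr ⟨card_roots_charpoly M, hc⟩]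
    simp
  have hsquarefree : Squarefree (minpoly ℂ M) := by
    have hdvd : minpoly ℂ M ∣ Polynomial.X ^ n - 1 := minpoly.dvd _ _ (by simp [hM])
    refine Squarefree.squarefree_of_dvd hdvd (Polynomial.Separable.squarefree ?_)
    rw [Polynomial.X_pow_sub_one_separable_iff]
    exact_mod_cast hn
  have hdvd : minpoly ℂ M ∣ Polynomial.X - Polynomial.C c := by
    rw [← hsquarefree.dvd_pow_iff_dvd (Fintype.card_ne_zero (α := m)), ← hcharpoly]
    exact minpoly.dvd _ _ (Matrix.aeval_self_charpoly M)
  have haeval := minpoly.dvd_iff.mp hdvd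
  rw [map_sub, Polynomial.aeval_X, Polynomial.aeval_C, sub_eq_zero] at haeval
  exact haeval

theorem trace_eq_zero_or_eq_scalar (hn : n ≠ 0) (hM : M ^ n = 1)
    (hintegral : IsIntegral ℤ (M.trace / Fintype.card m)) :
    M.trace = 0 ∨ ∃ c, M = Matrix.scalar m c := by
  rw [Matrix.trace_eq_sum_roots_charpoly, ← card_roots_charpoly M] at hintegral
  rw [Matrix.trace_eq_sum_roots_charpoly]
  exact (sum_eq_zero_or_exists_forall_eq hn (fun _ => pow_eq_one_of_mem_roots_charpoly hM)
    hintegral).imp_right fun ⟨c, hc⟩ => ⟨c, eq_scalar_of_pow_eq_one hn hM hc⟩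

end Matrix

/-! ### Spanning matrix representations -/

section SpanningRepresentation

variable {m : Type*} [Fintype m] [DecidableEq m]

theorem exists_eq_scalar_of_forall_commute {R : Type*} [CommSemiring R] {S : Set (Matrix m m R)}
    (hS : Submodule.span R S = ⊤) {M : Matrix m m R} (hM : ∀ N ∈ S, Commute N M) :
    ∃ c, M = Matrix.scalar m c := by
  have hcommute (N : Matrix m m R) : Commute N M := by
    have hN : N ∈ Submodule.span R S := hS ▸ Submodule.mem_top
    induction hN using Submodule.span_induction with
    | mem N hN => exact hM N hN
    | zero => exact Commute.zero_left M
    | add N N' _ _ hN hN' => exact hN.add_left hN'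
    | smul c N _ hN => exact hN.smul_left c
  obtain ⟨c, hc⟩ := Matrix.mem_range_scalar_of_commute_single (M := M) fun a b _ =>
    hcommute (Matrix.single a b 1)
  exact ⟨c, hc.symm⟩

variable {G : Type*} [Group G]

theorem trace_map_eq_of_isConj {R : Type*} [CommSemiring R] (ρ : G →* Matrix m m R) {g x : G}
    (h : IsConj g x) : (ρ x).trace = (ρ g).trace := by
  obtain ⟨c, rfl⟩ := isConj_iff.mp h
  rw [map_mul, Matrix.trace_mul_comm, ← map_mul, inv_mul_cancel_left]

theorem commute_map_sum_map_of_forall_conj_mem {R : Type*} [Semiring R] (f : G →* R)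
    {s : Finset G} (hs : ∀ x ∈ s, ∀ y : G, y * x * y⁻¹ ∈ s) (y : G) :
    Commute (f y) (∑ x ∈ s, f x) := by
  rw [commute_iff_eq, mul_sum, sum_mul]
  refine sum_bij' (fun x _ => y * x * y⁻¹) (fun x _ => y⁻¹ * x * y⁻¹⁻¹) (fun x hx => hs x hx y)
    (fun x hx => hs x hx y⁻¹) (fun x _ => by group) (fun x _ => by group) fun x _ => ?_
  rw [← map_mul, ← map_mul, inv_mul_cancel_right]

theorem isIntegral_sum_map [Finite G] {R : Type*} [Ring R] (f : G →* R) (s : Finset G) :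
    IsIntegral ℤ (∑ x ∈ s, f x) := by
  have hlift : ∑ x ∈ s, f x = MonoidAlgebra.lift ℤ R G f (∑ x ∈ s, MonoidAlgebra.of ℤ G x) := by
    simp only [map_sum, MonoidAlgebra.lift_of]
  rw [hlift]
  exact (IsIntegral.of_finite ℤ _).map _

theorem sum_map_eq_zero_of_span_range_eq_top [Fintype G] {K : Type*} [Field K]
    {ρ : G →* Matrix m m K} (hρ : Submodule.span K (Set.range ρ) = ⊤) (hne : ρ ≠ 1) :
    ∑ x, ρ x = 0 := by
  obtain ⟨y, hy⟩ := DFunLike.ne_iff.mp hne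
  have hfix : ρ y * ∑ x, ρ x = ∑ x, ρ x := by
    simp only [mul_sum, ← map_mul]
    exact Equiv.sum_comp (Equiv.mulLeft y) ρ
  obtain ⟨c, hc⟩ := exists_eq_scalar_of_forall_commute hρ (M := ∑ x, ρ x) (by
    rintro _ ⟨z, rfl⟩
    exact commute_map_sum_map_of_forall_conj_mem ρ (fun _ _ _ => mem_univ _) z)
  have hscalar : Matrix.scalar m c = c • (1 : Matrix m m K) := (Matrix.smul_one_eq_diagonal c).symm
  rw [hc, hscalar, mul_smul_comm, mul_one, ← sub_eq_zero, ← smul_sub, smul_eq_zero,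
    sub_eq_zero] at hfix
  rw [hc, hfix.resolve_right hy, map_zero]

theorem isIntegral_ncard_conjugatesOf_mul_trace_div [Finite G] [Nonempty m] {ρ : G →* Matrix m m ℂ}
    (hρ : Submodule.span ℂ (Set.range ρ) = ⊤) (g : G) :
    IsIntegral ℤ ((conjugatesOf g).ncard * (ρ g).trace / Fintype.card m) := by
  classical
  have := Fintype.ofFinite G
  let s := (conjugatesOf g).toFinset
  have hs : ∀ x ∈ s, ∀ y : G, y * x * y⁻¹ ∈ s := fun x hx y =>
    Set.mem_toFinset.mpr ((Set.mem_toFinset.mp hx).trans (isConj_iff.mpr ⟨y, rfl⟩))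
  obtain ⟨c, hc⟩ := exists_eq_scalar_of_forall_commute hρ (M := ∑ x ∈ s, ρ x) (by
    rintro _ ⟨y, rfl⟩
    exact commute_map_sum_map_of_forall_conj_mem ρ hs y)
  have hclass : ∀ x ∈ s, (ρ x).trace = (ρ g).trace := fun x hx =>
    trace_map_eq_of_isConj ρ (Set.mem_toFinset.mp hx : x ∈ conjugatesOf g)
  have htrace : (conjugatesOf g).ncard * (ρ g).trace = c * Fintype.card m := by
    calc (conjugatesOf g).ncard * (ρ g).trace = ∑ x ∈ s, (ρ x).trace := by
          rw [sum_congr rfl hclass,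
            sum_const, nsmul_eq_mul, Set.ncard_eq_toFinset_card']
      _ = c * Fintype.card m := by
          rw [← Matrix.trace_sum, hc]
          simp [Matrix.trace, mul_comm]
  have hinj : Function.Injective ((Algebra.ofId ℂ (Matrix m m ℂ)).restrictScalars ℤ) :=
    FaithfulSMul.algebraMap_injective ℂ (Matrix m m ℂ)
  rw [htrace, mul_div_cancel_right₀ _ (Nat.cast_ne_zero.mpr Fintype.card_ne_zero),
    ← isIntegral_algHom_iff _ hinj]
  exact hc ▸ isIntegral_sum_map ρ s

end SpanningRepresentation

/-! ### The regular representation -/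

theorem trace_mulLeft_pi_matrix {R ι : Type*} [CommRing R] [Fintype ι] {m : ι → Type*}
    [∀ i, Fintype (m i)] (a : Π i, Matrix (m i) (m i) R) :
    LinearMap.trace R _ (LinearMap.mulLeft R a) = ∑ i, Fintype.card (m i) * (a i).trace := by
  classical
  have hrepr (i : ι) (M : Matrix (m i) (m i) R) (x y : m i) :
      (Matrix.stdBasis R (m i) (m i)).repr M (x, y) = M x y := rfl
  rw [LinearMap.trace_eq_matrix_trace R (Pi.basis fun i => Matrix.stdBasis R (m i) (m i)),
    Matrix.trace, Fintype.sum_sigma]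
  refine sum_congr rfl fun i _ => ?_
  simp only [Fintype.sum_prod_type, Matrix.diag_apply, LinearMap.toMatrix_apply, Pi.basis_apply,
    Pi.basis_repr, LinearMap.mulLeft_apply, Matrix.stdBasis_eq_single, Pi.mul_apply,
    Pi.single_eq_same, hrepr, Matrix.mul_single_apply_same]
  simp [Matrix.trace, mul_sum]

theorem trace_mulLeft_monoidAlgebra_of {R G : Type*} [CommRing R] [Group G] [Fintype G]
    [DecidableEq G] (g : G) :
    LinearMap.trace R _ (LinearMap.mulLeft R (MonoidAlgebra.of R G g)) =
      if g = 1 then (Fintype.card G : R) else 0 := by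
  have hdiag (x : G) : LinearMap.toMatrix (MonoidAlgebra.basis G R) (MonoidAlgebra.basis G R)
      (LinearMap.mulLeft R (MonoidAlgebra.of R G g)) x x = if g = 1 then 1 else 0 := by
    rw [LinearMap.toMatrix_apply, LinearMap.mulLeft_apply, MonoidAlgebra.basis_apply,
      MonoidAlgebra.of_apply, MonoidAlgebra.single_mul_single]
    change (MonoidAlgebra.single (g * x) ((1 : R) * 1)).coeff x = _
    simp [MonoidAlgebra.coeff_single, Finsupp.single_apply]
  rw [LinearMap.trace_eq_matrix_trace R (MonoidAlgebra.basis G R), Matrix.trace]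
  simp only [Matrix.diag_apply, hdiag]
  split_ifs <;> simp

section Wedderburn

variable {K G ι : Type*} [Field K] [Group G] {m : ι → Type*}
  [∀ i, Fintype (m i)] [∀ i, DecidableEq (m i)]
  (e : MonoidAlgebra K G ≃ₐ[K] Π i, Matrix (m i) (m i) K)

/-- The matrix representation of `G` on the `i`-th block of a Wedderburn decomposition `e` of its
group algebra. Over `ℂ` these are the irreducible representations of `G`, each occurring once. -/
noncomputable def blockRep (i : ι) : G →* Matrix (m i) (m i) K where
  toFun x := e (MonoidAlgebra.of K G x) i
  map_one' := by rw [map_one, map_one, Pi.one_apply]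
  map_mul' x y := by rw [map_mul, map_mul, Pi.mul_apply]

theorem blockRep_apply (i : ι) (x : G) : blockRep e i x = e (MonoidAlgebra.of K G x) i := rfl

theorem span_range_blockRep (i : ι) :
    Submodule.span K (Set.range (blockRep e i)) = ⊤ := by
  classical
  have hmem (a : MonoidAlgebra K G) : e a i ∈ Submodule.span K (Set.range (blockRep e i)) := by
    induction a using MonoidAlgebra.induction_on with
    | of x => exact Submodule.subset_span ⟨x, rfl⟩
    | add a b ha hb => exact map_add e a b ▸ add_mem ha hb
    | smul c a ha => exact map_smul e c a ▸ Submodule.smul_mem _ c ha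
  refine eq_top_iff.mpr fun M _ => ?_
  simpa only [AlgEquiv.apply_symm_apply, Pi.single_eq_same] using hmem (e.symm (Pi.single i M))

variable [Fintype G] [Fintype ι]

theorem sum_card_mul_trace_blockRep [DecidableEq G] (x : G) :
    ∑ i, Fintype.card (m i) * (blockRep e i x).trace =
      if x = 1 then (Fintype.card G : K) else 0 := by
  have hconj : e.toLinearEquiv.conj (LinearMap.mulLeft K (MonoidAlgebra.of K G x)) =
      LinearMap.mulLeft K (e (MonoidAlgebra.of K G x)) := by
    ext1 v
    change e (MonoidAlgebra.of K G x * e.symm v) = e (MonoidAlgebra.of K G x) * v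
    rw [map_mul, AlgEquiv.apply_symm_apply]
  simp only [blockRep_apply]
  rw [← trace_mulLeft_pi_matrix, ← hconj, LinearMap.trace_conj', trace_mulLeft_monoidAlgebra_of]

-- Sum the character of the regular representation over `G`: a nontrivial block contributes `0`.
open Classical in
theorem sum_card_sq_of_blockRep_eq_one [CharZero K] :
    ∑ i with blockRep e i = 1, (Fintype.card (m i) : K) ^ 2 = 1 := by
  have hcard : (Fintype.card G : K) ≠ 0 := Nat.cast_ne_zero.mpr Fintype.card_ne_zero
  have hblock (i : ι) : ∑ x, (blockRep e i x).trace =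
      if blockRep e i = 1 then (Fintype.card G : K) * Fintype.card (m i) else 0 := by
    split_ifs with htrivial
    · simp [htrivial]
    · rw [← Matrix.trace_sum, sum_map_eq_zero_of_span_range_eq_top (span_range_blockRep e i)
        htrivial, Matrix.trace_zero]
  refine mul_left_cancel₀ hcard ?_
  calc (Fintype.card G : K) * ∑ i with blockRep e i = 1, (Fintype.card (m i) : K) ^ 2
      = ∑ i, Fintype.card (m i) * ∑ x, (blockRep e i x).trace := by
        rw [mul_sum, sum_filter]
        refine sum_congr rfl fun i _ => ?_
        rw [hblock]
        split_ifs <;> ring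
    _ = ∑ x, ∑ i, Fintype.card (m i) * (blockRep e i x).trace := by
        simp only [mul_sum]
        exact sum_comm
    _ = Fintype.card G * 1 := by
        simp only [sum_card_mul_trace_blockRep, sum_ite_eq', mem_univ, if_true, mul_one]

end Wedderburn

/-! ### Burnside's theorem -/

theorem isIntegral_div_of_coprime {K : Type*} [Field K] {a b : ℕ} (hab : a.Coprime b)
    (ha : (a : K) ≠ 0) {x : K} (hx : IsIntegral ℤ x) (h : IsIntegral ℤ (b * x / a)) :
    IsIntegral ℤ (x / a) := by
  obtain ⟨u, v, huv⟩ := Nat.isCoprime_iff_coprime.mpr hab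
  have huv_cast : (u : K) * a + v * b = 1 := by exact_mod_cast congrArg (Int.cast : ℤ → K) huv
  have hbezout : x / a = u * x + v * (b * x / a) := by
    field_simp
    linear_combination -x * huv_cast
  rw [hbezout]
  exact ((isIntegral_algebraMap (x := u)).mul hx).add ((isIntegral_algebraMap (x := v)).mul h)

theorem eq_one_of_isIntegral_inv_natCast {K : Type*} [Field K] [CharZero K] {q : ℕ} (hq : q ≠ 0)
    (h : IsIntegral ℤ (q : K)⁻¹) : q = 1 := by
  have hrat : IsIntegral ℤ (q : ℚ)⁻¹ := by
    rw [← isIntegral_algHom_iff (algebraMap ℚ K).toIntAlgHom (algebraMap ℚ K).injective]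
    simpa using h
  obtain ⟨z, hz⟩ := IsIntegrallyClosed.isIntegral_iff.mp hrat
  have hmul : (z : ℚ) * q = 1 := by
    rw [show (z : ℚ) = (q : ℚ)⁻¹ from hz, inv_mul_cancel₀ (Nat.cast_ne_zero.mpr hq)]
  have hdvd : (q : ℤ) ∣ 1 := ⟨z, by rw [mul_comm]; exact_mod_cast hmul.symm⟩
  exact Nat.dvd_one.mp (by exact_mod_cast hdvd)

theorem injective_or_eq_one_of_isSimpleGroup {G M : Type*} [Group G] [IsSimpleGroup G] [Monoid M]
    (f : G →* M) : Function.Injective f ∨ f = 1 := by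
  refine f.toHomUnits.normal_ker.eq_bot_or_eq_top.imp (fun hbot x y hxy => ?_) fun htop => ?_
  · exact (MonoidHom.ker_eq_bot_iff _).mp hbot (Units.ext hxy)
  · ext x
    exact congrArg Units.val (MonoidHom.mem_ker.mp (htop ▸ Subgroup.mem_top x))

theorem mem_center_of_map_eq_scalar {R G m : Type*} [CommSemiring R] [Group G] [Fintype m]
    [DecidableEq m] {ρ : G →* Matrix m m R} {g : G} (hinj : Function.Injective ρ)
    {c : R} (hc : ρ g = Matrix.scalar m c) : g ∈ Subgroup.center G := by
  refine Subgroup.mem_center_iff.mpr fun x => hinj ?_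
  rw [map_mul, map_mul, hc]
  exact (Matrix.scalar_commute c (Commute.all c) (ρ x)).symm

section Burnside

variable {G : Type*} [Group G] [Finite G] {m : Type*} [Fintype m] [DecidableEq m] [Nonempty m]
  {ρ : G →* Matrix m m ℂ} {g : G}

theorem trace_eq_zero_or_eq_scalar_of_coprime_ncard (hρ : Submodule.span ℂ (Set.range ρ) = ⊤)
    (hcoprime : (Fintype.card m).Coprime (conjugatesOf g).ncard) :
    (ρ g).trace = 0 ∨ ∃ c, ρ g = Matrix.scalar m c := by
  have hpow : ρ g ^ Nat.card G = 1 := by rw [← map_pow, pow_card_eq_one', map_one]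
  refine trace_eq_zero_or_eq_scalar Nat.card_pos.ne' hpow ?_
  exact isIntegral_div_of_coprime hcoprime (Nat.cast_ne_zero.mpr Fintype.card_ne_zero)
    (isIntegral_trace_of_pow_eq_one Nat.card_pos.ne' hpow)
    (isIntegral_ncard_conjugatesOf_mul_trace_div hρ g)

variable [IsSimpleGroup G] {q b : ℕ}

theorem eq_one_or_exists_card_mul_trace_eq_mul (hρ : Submodule.span ℂ (Set.range ρ) = ⊤)
    (hg : g ∉ Subgroup.center G) (hq : q.Prime) (hcard : (conjugatesOf g).ncard = q ^ b) :
    ρ = 1 ∨ ∃ t, IsIntegral ℤ t ∧ Fintype.card m * (ρ g).trace = q * t := by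
  by_cases hdvd : q ∣ Fintype.card m
  · obtain ⟨r, hr⟩ := hdvd
    have hpow : ρ g ^ Nat.card G = 1 := by rw [← map_pow, pow_card_eq_one', map_one]
    have htrace := isIntegral_trace_of_pow_eq_one Nat.card_pos.ne' hpow
    exact .inr ⟨r * (ρ g).trace, (isIntegral_natCast r).mul htrace, by rw [hr]; push_cast; ring⟩
  have hcoprime : (Fintype.card m).Coprime (conjugatesOf g).ncard :=
    hcard ▸ ((hq.coprime_iff_not_dvd.mpr hdvd).symm).pow_right b
  rcases trace_eq_zero_or_eq_scalar_of_coprime_ncard hρ hcoprime with hzero | ⟨c, hc⟩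
  · exact .inr ⟨0, isIntegral_zero, by rw [hzero, mul_zero, mul_zero]⟩
  · exact .inl ((injective_or_eq_one_of_isSimpleGroup ρ).resolve_left fun hinj =>
      hg (mem_center_of_map_eq_scalar hinj hc))

-- Otherwise the regular character at `g` would read `0 = 1 + q t` with `t` an algebraic integer.
theorem mem_center_of_ncard_conjugatesOf_eq_prime_pow (hq : q.Prime)
    (hcard : (conjugatesOf g).ncard = q ^ b) : g ∈ Subgroup.center G := by
  classical
  by_contra hg
  have := Fintype.ofFinite G
  obtain ⟨k, d, hd, ⟨e⟩⟩ :=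
    IsSemisimpleRing.exists_algEquiv_pi_matrix_of_isAlgClosed ℂ (MonoidAlgebra ℂ G)
  have hblock (i : Fin k) (hi : blockRep e i ≠ 1) : ∃ t, IsIntegral ℤ t ∧
      Fintype.card (Fin (d i)) * (blockRep e i g).trace = q * t :=
    (eq_one_or_exists_card_mul_trace_eq_mul (span_range_blockRep e i) hg hq hcard).resolve_left hi
  choose! t ht_integral ht using hblock
  let T := ∑ i with blockRep e i ≠ 1, t i
  have hT_integral : IsIntegral ℤ T :=
    IsIntegral.sum _ fun i hi => ht_integral i (mem_filter.mp hi).2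
  have hsum : 0 = 1 + q * T := by
    calc (0 : ℂ) = ∑ i, Fintype.card (Fin (d i)) * (blockRep e i g).trace := by
          rw [sum_card_mul_trace_blockRep, if_neg]
          rintro rfl
          exact hg (one_mem _)
      _ = ∑ i with blockRep e i = 1, (Fintype.card (Fin (d i)) : ℂ) ^ 2 + q * T := by
          rw [← sum_filter_add_sum_filter_not univ fun i => blockRep e i = 1, mul_sum]
          congr 1
          · refine sum_congr rfl fun i hi => ?_
            rw [(mem_filter.mp hi).2, MonoidHom.one_apply, Matrix.trace_one, sq]
          · exact sum_congr rfl fun i hi => ht i (mem_filter.mp hi).2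
      _ = 1 + q * T := by rw [sum_card_sq_of_blockRep_eq_one]
  have hinv : (q : ℂ)⁻¹ = -T := by
    refine inv_eq_of_mul_eq_one_right ?_
    linear_combination hsum
  exact hq.ne_one (eq_one_of_isIntegral_inv_natCast hq.ne_zero (hinv ▸ hT_integral.neg))

end Burnside

theorem ncard_conjugatesOf_dvd_index {G : Type*} [Group G] {P : Subgroup G} {z : G}
    (hz : ∀ x ∈ P, x * z = z * x) : (conjugatesOf z).ncard ∣ P.index := by
  have horbit : conjugatesOf z = MulAction.orbit (ConjAct G) z := by
    ext x
    rw [ConjAct.mem_orbit_conjAct, isConj_comm]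
    rfl
  rw [horbit, ← MulAction.index_stabilizer,
    ← Subgroup.index_comap_of_surjective (f := (ConjAct.toConjAct (G := G)).toMonoidHom) _
      (ConjAct.toConjAct (G := G)).surjective]
  refine Subgroup.index_dvd_of_le fun x hx => ?_
  change ConjAct.toConjAct x • z = z
  rw [ConjAct.toConjAct_smul, hz x hx, mul_inv_cancel_right]

theorem exists_ne_one_forall_mem_sylow_commute {G : Type*} [Group G] [Finite G] {p : ℕ}
    [Fact p.Prime] (hp : p ∣ Nat.card G) (P : Sylow p G) :
    ∃ z : G, z ≠ 1 ∧ ∀ x ∈ P, x * z = z * x := by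
  have : Nontrivial P := Finite.one_lt_card_iff_nontrivial.mp <|
    (Fact.out : p.Prime).one_lt.trans_le
      (Nat.le_of_dvd Nat.card_pos (P.dvd_card_of_dvd_card hp))
  have := P.isPGroup'.center_nontrivial
  obtain ⟨⟨z, hz⟩, hne⟩ := exists_ne (1 : Subgroup.center P)
  refine ⟨z, fun h => hne (Subtype.ext (Subtype.ext h)), fun x hx => ?_⟩
  exact congrArg Subtype.val (Subgroup.mem_center_iff.mp hz ⟨x, hx⟩)

theorem mul_comm_of_isSimpleGroup_of_primeFactors_subset_pair {G : Type*} [Group G] [Finite G]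
    [IsSimpleGroup G] {p q : ℕ} (hp : p.Prime) (hq : q.Prime) (hdvd : p ∣ Nat.card G)
    (hsubset : (Nat.card G).primeFactors ⊆ {p, q}) (a b : G) : a * b = b * a := by
  have : Fact p.Prime := ⟨hp⟩
  let P : Sylow p G := default
  obtain ⟨z, hne, hz⟩ := exists_ne_one_forall_mem_sylow_commute hdvd P
  have hclass_dvd : (conjugatesOf z).ncard ∣ (P : Subgroup G).index :=
    ncard_conjugatesOf_dvd_index hz
  have hclass_ne : (conjugatesOf z).ncard ≠ 0 :=
    ne_zero_of_dvd_ne_zero Subgroup.index_ne_zero_of_finite hclass_dvd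
  have hclass_pow := Nat.eq_prime_pow_of_unique_prime_dvd (p := q) hclass_ne
    fun {r} hr hr_dvd => by
      have hr_index := hr_dvd.trans hclass_dvd
      have hr_mem := hsubset (Nat.mem_primeFactors.mpr
        ⟨hr, hr_index.trans (Subgroup.index_dvd_card _), Nat.card_pos.ne'⟩)
      rw [mem_insert, mem_singleton] at hr_mem
      exact hr_mem.resolve_left fun h => P.not_dvd_index (h ▸ hr_index)
  have hcenter := mem_center_of_ncard_conjugatesOf_eq_prime_pow hq hclass_pow
  have htop : Subgroup.center G = ⊤ :=
    (inferInstance : (Subgroup.center G).Normal).eq_bot_or_eq_top.resolve_left fun hbot =>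
      hne (Subgroup.mem_bot.mp (hbot ▸ hcenter))
  exact (Subgroup.mem_center_iff.mp (htop ▸ Subgroup.mem_top a) b).symm

theorem natCard_quotient_lt_natCard {G : Type*} [Group G] [Finite G] {N : Subgroup G}
    (hN : N ≠ ⊥) : Nat.card (G ⧸ N) < Nat.card G := by
  rw [Subgroup.card_eq_card_quotient_mul_card_subgroup N]
  exact lt_mul_of_one_lt_right Nat.card_pos (N.one_lt_card_iff_ne_bot.mpr hN)

theorem isSolvable_of_primeFactors_subset_pair {G : Type*} [Group G] [Finite G] {p q : ℕ}
    (hp : p.Prime) (hq : q.Prime) (hsubset : (Nat.card G).primeFactors ⊆ {p, q}) :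
    Group.IsSolvable G := by
  induction hn : Nat.card G using Nat.strong_induction_on generalizing G with
  | _ n ih =>
    subst hn
    by_cases hproper : ∃ N : Subgroup G, N.Normal ∧ N ≠ ⊥ ∧ N ≠ ⊤
    · obtain ⟨N, _, hbot, htop⟩ := hproper
      rw [Group.isSolvable_iff_subgroup_quotient N]
      have hcard : Nat.card G ≠ 0 := Nat.card_pos.ne'
      exact ⟨ih _ (Set.ncard_lt_card (mt N.coe_eq_univ.mp htop))
          ((Nat.primeFactors_mono N.card_subgroup_dvd_card hcard).trans hsubset) rfl,
        ih _ (natCard_quotient_lt_natCard hbot)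
          ((Nat.primeFactors_mono N.card_quotient_dvd_card hcard).trans hsubset) rfl⟩
    cases subsingleton_or_nontrivial G
    · infer_instance
    have : IsSimpleGroup G := ⟨fun N hN => by
      by_contra! hne
      exact hproper ⟨N, hN, hne.1, hne.2⟩⟩
    obtain ⟨r, hr, hdvd⟩ := Nat.exists_prime_and_dvd (Finite.one_lt_card (α := G)).ne'
    have hr_mem := hsubset (Nat.mem_primeFactors.mpr ⟨hr, hdvd, Nat.card_pos.ne'⟩)
    rw [mem_insert, mem_singleton] at hr_mem
    refine Group.isSolvable_of_comm ?_
    rcases hr_mem with rfl | rfl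
    · exact mul_comm_of_isSimpleGroup_of_primeFactors_subset_pair hp hq hdvd hsubset
    · exact mul_comm_of_isSimpleGroup_of_primeFactors_subset_pair hq hp hdvd
        (pair_comm p r ▸ hsubset)

/-! ### Nonsolvable groups -/

theorem meanOrderWeight_le_of_not_isSolvable {G : Type*} [Group G] [Fintype G]
    (hns : ¬ Group.IsSolvable G) : meanOrderWeight G ≤ 7 / 20 := by
  induction hn : Nat.card G using Nat.strong_induction_on generalizing G with
  | _ n ih =>
    subst hn
    by_cases hcore : ∃ p, p.Prime ∧ pCore p G ≠ ⊥
    · obtain ⟨p, hp, hne⟩ := hcore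
      have : Fact p.Prime := ⟨hp⟩
      have : Fintype (G ⧸ pCore p G) := Fintype.ofFinite _
      have hquotient_ns : ¬ Group.IsSolvable (G ⧸ pCore p G) := by
        intro hquotient
        have := (isPGroup_pCore (p := p) (G := G)).isNilpotent
        exact hns ((Group.isSolvable_iff_subgroup_quotient (pCore p G)).mpr
          ⟨inferInstance, hquotient⟩)
      exact (meanOrderWeight_le_of_surjective (QuotientGroup.mk'_surjective (pCore p G))).trans
        (ih _ (natCard_quotient_lt_natCard hne) hquotient_ns rfl)
    push Not at hcore
    obtain ⟨p, hp, hdvd, hfive⟩ : ∃ p, p.Prime ∧ p ∣ Nat.card G ∧ 5 ≤ p := by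
      by_contra! hlt
      refine hns (isSolvable_of_primeFactors_subset_pair Nat.prime_two Nat.prime_three
        fun p hp => ?_)
      have hprime := Nat.prime_of_mem_primeFactors hp
      have hlt_five := hlt p hprime (Nat.dvd_of_mem_primeFactors hp)
      interval_cases p <;> revert hprime <;> decide
    have : Fact p.Prime := ⟨hp⟩
    exact meanOrderWeight_le_of_pCore_eq_bot hfive hdvd (hcore p hp)

theorem avgOrder_gt_A5_of_few_involutions_general {G : Type*} [Group G] [Fintype G]
    (hns : ¬ Group.IsSolvable G) :
    73 / 20 ≤ avgOrder G + 2 * (numOrderTwo G / Fintype.card G) := by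
  have hmean := meanOrderWeight_le_of_not_isSolvable hns
  rw [meanOrderWeight_eq] at hmean
  linarith

theorem avgOrder_gt_A5_of_few_involutions {G : Type*} [Group G] [Fintype G]
    (hns : ¬ IsSolvable G)
    (h : (numOrderTwo G : ℚ) < (Fintype.card G : ℚ) / 15) :
    211 / 60 < avgOrder G := by
  have hratio : (numOrderTwo G : ℚ) / Fintype.card G < 1 / 15 := by
    rw [div_lt_iff₀ (Nat.cast_pos.mpr Fintype.card_pos)]
    linarith
  linarith [avgOrder_gt_A5_of_few_involutions_general hns]
end

section
/- Let G be a finite non-solvable group such that the number i₂(G) of elements of order 2 satisfies i₂(G) ≤ |G|/16 and the number i₃(G) of elements of order 3 satisfies i₃(G) + 1 ≤ |G|/14. Then o(G) > 19/5. -/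
/-- `i₃(G)`: the number of elements of order exactly 3 in `G`. -/
noncomputable def numOrderThree (G : Type*) [Group G] [Fintype G] : ℕ :=
  (Finset.univ.filter fun g : G => orderOf g = 3).card

/-!
Counting elements by order gives `4|G| + e ≤ ψ(G) + 3 + 2i₂(G) + i₃(G)`, where `e` is the number of
elements of order at least `5`. If `e ≠ 0` then `e ≥ 2`, because such elements differ from their
inverses, and the hypotheses on `i₂` and `i₃` finish the proof.

Otherwise all orders are at most `4`.
* If `i₂ = 0`, all nontrivial elements have order `3`, so `i₃ + 1 = |G|`, which is excluded.
* If `i₃ = 0`, then `G` has exponent dividing `4`. For `i₂ ≥ 3` the count suffices, and for `i₂ ≤ 2`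
  there is at most one involution. Then an element `x` of order `4` has centralizer `⟨x⟩` and no
  conjugates besides `x` and `x⁻¹`, so `|G| ≤ 8 < 14`.
* If `i₂` and `i₃` are positive, then `|G| = 2ᵃ3ᵇ`. No element of `2`-power order commutes with one
  of order `3`, so conjugating an element of order `3` by a Sylow `2`-subgroup yields `2ᵃ ≤ i₃`;
  likewise `3ᵇ ≤ i₂`. Hence `2ᵃ ≥ 16` and `3ᵇ > 14`, so `432 ∣ |G|` and the count suffices again.
-/

open Finset

section Counting

variable {G : Type*} [Group G] [Fintype G]

theorem card_filter_orderOf_eq_one : #{g : G | orderOf g = 1} = 1 :=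
  card_eq_one.2 ⟨1, by ext g; simp⟩

theorem card_eq_sum_card_filter_orderOf_eq {m : ℕ} (hm : ∀ g : G, orderOf g ≤ m) :
    Fintype.card G = ∑ k ∈ Icc 1 m, #{g : G | orderOf g = k} :=
  card_eq_sum_card_fiberwise fun g _ ↦ mem_coe.2 (mem_Icc.2 ⟨orderOf_pos g, hm g⟩)

theorem card_eq_of_forall_orderOf_le_four (h4 : ∀ g : G, orderOf g ≤ 4) :
    Fintype.card G = 1 + numOrderTwo G + numOrderThree G + #{g : G | orderOf g = 4} := by
  rw [card_eq_sum_card_filter_orderOf_eq h4, sum_Icc_succ_top (by norm_num),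
    sum_Icc_succ_top (by norm_num), sum_Icc_succ_top (by norm_num), Icc_self, sum_singleton,
    card_filter_orderOf_eq_one]
  rfl

theorem four_mul_card_add_le_sum_orderOf :
    4 * Fintype.card G + #{g : G | 5 ≤ orderOf g} ≤
      ∑ g : G, orderOf g + 3 + 2 * numOrderTwo G + numOrderThree G := by
  have pointwise (g : G) : 4 + (if 5 ≤ orderOf g then 1 else 0) ≤
      orderOf g + 3 * (if orderOf g = 1 then 1 else 0) + 2 * (if orderOf g = 2 then 1 else 0) +
        (if orderOf g = 3 then 1 else 0) := by
    have := orderOf_pos g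
    split_ifs <;> omega
  have summed := sum_le_sum fun g (_ : g ∈ univ) ↦ pointwise g
  simp only [sum_add_distrib, ← mul_sum, ← card_filter, card_filter_orderOf_eq_one, sum_const,
    card_univ, smul_eq_mul] at summed
  rw [numOrderTwo, numOrderThree]
  omega

theorem two_le_card_filter_le_orderOf {k : ℕ} (hk : 2 < k) {x : G} (hx : k ≤ orderOf x) :
    2 ≤ #{g : G | k ≤ orderOf g} := by
  classical
  have hne : x ≠ x⁻¹ := fun h ↦ by
    have hsq : x ^ 2 = 1 := by rw [pow_two, ← eq_inv_iff_mul_eq_one]; exact h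
    have := orderOf_le_of_pow_eq_one two_pos hsq
    omega
  calc 2 = #{x, x⁻¹} := (card_pair hne).symm
    _ ≤ #{g : G | k ≤ orderOf g} := card_le_card <| by
      simp [insert_subset_iff, hx]

theorem numOrderTwo_pos_iff : 0 < numOrderTwo G ↔ ∃ g : G, orderOf g = 2 := by
  simp [numOrderTwo, card_pos, Finset.Nonempty]

theorem numOrderThree_pos_iff : 0 < numOrderThree G ↔ ∃ g : G, orderOf g = 3 := by
  simp [numOrderThree, card_pos, Finset.Nonempty]

end Counting

section Conjugation

variable {G : Type*} [Group G]

theorem orderOf_conj_eq (g x : G) : orderOf (g * x * g⁻¹) = orderOf x :=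
  (MulAut.conj g).orderOf_eq x

theorem ncard_conjugatesOf_mul_card_centralizer (x : G) :
    (conjugatesOf x).ncard * Nat.card (Subgroup.centralizer {x}) = Nat.card G := by
  have horbit : MulAction.orbit (ConjAct G) x = conjugatesOf x := by
    rw [ConjAct.orbit_eq_carrier_conjClasses]
    rfl
  have hcentralizer :
      Nat.card (Subgroup.centralizer {x}) = Nat.card (MulAction.stabilizer (ConjAct G) x) := by
    rw [ConjAct.stabilizer_eq_centralizer]
    rfl
  rw [← horbit, ← MulAction.index_stabilizer, hcentralizer, mul_comm, Subgroup.card_mul_index]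
  rfl

theorem card_le_card_filter_orderOf_eq [Fintype G] {S : Subgroup G} {x : G}
    (hS : Disjoint S (Subgroup.centralizer {x})) :
    Nat.card S ≤ #{g : G | orderOf g = orderOf x} := by
  let conj (s : S) : {g : G // orderOf g = orderOf x} := ⟨s * x * (s : G)⁻¹, orderOf_conj_eq _ x⟩
  have hinj : Function.Injective conj := by
    intro s t h
    have hst : (s : G) * x * (s : G)⁻¹ = t * x * (t : G)⁻¹ := congrArg Subtype.val h
    have hmem : (t : G)⁻¹ * s ∈ Subgroup.centralizer {x} := by
      rw [Subgroup.mem_centralizer_singleton_iff, mul_assoc, mul_inv_eq_iff_eq_mul.1 hst]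
      group
    have hone := Subgroup.disjoint_def.1 hS (S.mul_mem (S.inv_mem t.2) s.2) hmem
    exact Subtype.ext (inv_mul_eq_one.1 hone).symm
  rw [← Fintype.card_subtype, ← Nat.card_eq_fintype_card]
  exact Nat.card_le_card_of_injective conj hinj

theorem disjoint_centralizer_of_forall_orderOf_lt {p : ℕ} [Fact p.Prime] {S : Subgroup G}
    (hS : IsPGroup p S) {x : G} (hpx : p.Coprime (orderOf x))
    (hlt : ∀ g : G, orderOf g < p * orderOf x) :
    Disjoint S (Subgroup.centralizer {x}) := by
  rw [Subgroup.disjoint_def]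
  intro s hs hsx
  by_contra hs1
  obtain ⟨k, hk⟩ := hS.exists_orderOf_eq_pow ⟨s, hs⟩
  rw [Subgroup.orderOf_mk] at hk
  have hk0 : k ≠ 0 := by
    rintro rfl
    exact hs1 (orderOf_eq_one_iff.1 hk)
  have hcomm : Commute s x := Subgroup.mem_centralizer_singleton_iff.1 hsx
  have hmul : orderOf (s * x) = p ^ k * orderOf x := by
    rw [hcomm.orderOf_mul_eq_mul_orderOf_of_coprime (hk ▸ hpx.pow_left k), hk]
  exact (hlt (s * x)).not_ge (hmul ▸ Nat.mul_le_mul_right _ (Nat.le_self_pow hk0 p))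

end Conjugation

section UniqueInvolution

variable {G : Type*} [Group G]

theorem exists_third_orderOf_eq_two {s t : G} (hs : orderOf s = 2) (ht : orderOf t = 2)
    (hst : s ≠ t) : ∃ u : G, orderOf u = 2 ∧ u ≠ s ∧ u ≠ t := by
  by_cases hcomm : Commute s t
  · obtain ⟨hs2, hs1⟩ := orderOf_eq_prime_iff.1 hs
    obtain ⟨ht2, ht1⟩ := orderOf_eq_prime_iff.1 ht
    have hst1 : s * t ≠ 1 := fun h ↦
      hst <| (eq_inv_of_mul_eq_one_left h).trans (inv_eq_self_of_orderOf_eq_two ht)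
    refine ⟨s * t, orderOf_eq_prime ?_ hst1, mul_ne_left.2 ht1, mul_ne_right.2 hs1⟩
    rw [hcomm.mul_pow, hs2, ht2, mul_one]
  · refine ⟨s * t * s⁻¹, (orderOf_conj_eq s t).trans ht, fun h ↦ hst ?_, fun h ↦ hcomm ?_⟩
    · exact (mul_left_cancel (mul_inv_eq_iff_eq_mul.1 h)).symm
    · exact mul_inv_eq_iff_eq_mul.1 h

theorem eq_of_orderOf_eq_two_of_numOrderTwo_le_two [Fintype G] (h : numOrderTwo G ≤ 2) {s t : G}
    (hs : orderOf s = 2) (ht : orderOf t = 2) : s = t := by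
  by_contra hst
  obtain ⟨u, hu, hus, hut⟩ := exists_third_orderOf_eq_two hs ht hst
  refine h.not_gt (two_lt_card.2 ⟨s, ?_, t, ?_, u, ?_, hst, hus.symm, hut.symm⟩) <;> simpa

theorem conj_eq_self_or_inv_of_unique_involution {x : G}
    (h4 : ∀ g : G, g ^ 4 = 1) (hx : ∀ g : G, g ^ 2 = 1 → g = 1 ∨ g = x ^ 2) (g : G) :
    g * x * g⁻¹ = x ∨ g * x * g⁻¹ = x⁻¹ := by
  have hsq (y : G) : y ^ 2 = 1 ∨ y ^ 2 = x ^ 2 := hx _ (by rw [← pow_mul, h4])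
  have hx4 : x ^ 2 * x ^ 2 = 1 := by rw [← pow_add, h4]
  have hginv : g⁻¹ = g ∨ g⁻¹ = g * x ^ 2 := by
    rcases hsq g with h | h
    · exact .inl (inv_eq_of_mul_eq_one_left (by rwa [← pow_two]))
    · exact .inr (inv_eq_of_mul_eq_one_right (by rw [← mul_assoc, ← pow_two, h, hx4]))
  have hmul : g * x * g⁻¹ * x = 1 ∨ g * x * g⁻¹ * x = x ^ 2 := by
    have hgx : (g * x) ^ 2 = g * x * g * x := by simp only [pow_two, mul_assoc]
    rcases hginv with h | h
    · rw [h, ← hgx]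
      exact hsq _
    · have hgx' : g * x * (g * x ^ 2) * x = (g * x) ^ 2 * x ^ 2 := by
        rw [hgx]; group
      rw [h, hgx']
      rcases hsq (g * x) with h | h <;> simp [h, hx4]
  rcases hmul with h | h
  · exact .inr (eq_inv_of_mul_eq_one_left h)
  · exact .inl (mul_right_cancel (h.trans (pow_two x)))

theorem centralizer_le_zpowers_of_unique_involution {x : G}
    (h4 : ∀ g : G, g ^ 4 = 1) (hx : ∀ g : G, g ^ 2 = 1 → g = 1 ∨ g = x ^ 2) :
    Subgroup.centralizer {x} ≤ Subgroup.zpowers x := by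
  intro y hy
  have hcomm : Commute y x := Subgroup.mem_centralizer_singleton_iff.1 hy
  rcases hx (y ^ 2) (by rw [← pow_mul, h4]) with h | h
  · rcases hx y h with rfl | rfl
    · exact one_mem _
    · exact pow_mem (Subgroup.mem_zpowers x) 2
  · have hquot : (y * x⁻¹) ^ 2 = 1 := by
      rw [hcomm.inv_right.mul_pow, h, inv_pow, mul_inv_cancel]
    rcases hx _ hquot with h | h
    · exact mul_inv_eq_one.1 h ▸ Subgroup.mem_zpowers x
    · rw [mul_inv_eq_iff_eq_mul.1 h]
      exact mul_mem (pow_mem (Subgroup.mem_zpowers x) 2) (Subgroup.mem_zpowers x)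

theorem card_le_eight_of_unique_involution {x : G}
    (h4 : ∀ g : G, g ^ 4 = 1) (hx : ∀ g : G, g ^ 2 = 1 → g = 1 ∨ g = x ^ 2) :
    Nat.card G ≤ 8 := by
  have hconj : conjugatesOf x ⊆ {x, x⁻¹} := by
    intro y hy
    obtain ⟨g, rfl⟩ := isConj_iff.1 hy
    exact conj_eq_self_or_inv_of_unique_involution h4 hx g
  have hclass : (conjugatesOf x).ncard ≤ 2 :=
    (Set.ncard_le_ncard hconj).trans (Set.ncard_insert_le _ _ |>.trans (by simp))
  have hcentralizer : Nat.card (Subgroup.centralizer {x}) ≤ 4 := by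
    have hfin : Finite (Subgroup.zpowers x) :=
      finite_zpowers.2 (isOfFinOrder_iff_pow_eq_one.2 ⟨4, by norm_num, h4 x⟩)
    calc Nat.card (Subgroup.centralizer {x})
        ≤ Nat.card (Subgroup.zpowers x) :=
          Subgroup.card_le_of_le (centralizer_le_zpowers_of_unique_involution h4 hx)
      _ = orderOf x := Nat.card_zpowers x
      _ ≤ 4 := orderOf_le_of_pow_eq_one (by norm_num) (h4 x)
  rw [← ncard_conjugatesOf_mul_card_centralizer x]
  exact Nat.mul_le_mul hclass hcentralizer

end UniqueInvolution

theorem two_pow_four_mul_three_pow_three_dvd {a b : ℕ} (h2 : 16 * 3 ^ b ≤ 2 ^ a * 3 ^ b)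
    (h3 : 14 * (2 ^ a + 1) ≤ 2 ^ a * 3 ^ b) : 2 ^ 4 * 3 ^ 3 ∣ 2 ^ a * 3 ^ b := by
  have ha : 2 ^ 4 ≤ 2 ^ a := Nat.le_of_mul_le_mul_right h2 (pow_pos three_pos b)
  have hb : 3 ^ 2 < 3 ^ b := by
    by_contra! hle
    have := Nat.mul_le_mul_left (2 ^ a) hle
    omega
  exact mul_dvd_mul (pow_dvd_pow 2 ((Nat.pow_le_pow_iff_right (by norm_num)).1 ha))
    (pow_dvd_pow 3 ((Nat.pow_lt_pow_iff_right (by norm_num)).1 hb))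

section OrdersAtMostFour

variable {G : Type*} [Group G]

theorem card_eq_card_sylow_mul_card_sylow [Finite G] {p q : ℕ} [Fact p.Prime] [Fact q.Prime]
    (hpq : p ≠ q) (hG : (Nat.card G).primeFactors ⊆ {p, q}) (P : Sylow p G) (Q : Sylow q G) :
    Nat.card G = Nat.card P * Nat.card Q := by
  calc
    Nat.card G = (Nat.card G).factorization.prod (· ^ ·) :=
        (Nat.prod_factorization_pow_eq_self Nat.card_pos.ne').symm
    _ = ∏ r ∈ {p, q}, r ^ (Nat.card G).factorization r :=
        Finsupp.prod_of_support_subset _ hG _ fun r _ ↦ pow_zero r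
    _ = Nat.card P * Nat.card Q := by
        rw [prod_pair hpq, P.card_eq_multiplicity, Q.card_eq_multiplicity]

theorem primeFactors_card_subset_of_forall_orderOf_le_four [Finite G]
    (h4 : ∀ g : G, orderOf g ≤ 4) : (Nat.card G).primeFactors ⊆ {2, 3} := by
  intro p hp
  have hprime := Nat.prime_of_mem_primeFactors hp
  have : Fact p.Prime := ⟨hprime⟩
  obtain ⟨x, rfl⟩ := exists_prime_orderOf_dvd_card' (G := G) p (Nat.dvd_of_mem_primeFactors hp)
  have hle := h4 x
  interval_cases orderOf x <;> simp_all +decide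

variable [Fintype G]

theorem card_eq_numOrderThree_add_one_of_numOrderTwo_eq_zero (h4 : ∀ g : G, orderOf g ≤ 4)
    (h2 : numOrderTwo G = 0) : Fintype.card G = numOrderThree G + 1 := by
  have hempty : #{g : G | orderOf g = 4} = 0 := by
    rw [card_eq_zero, filter_eq_empty_iff]
    intro g _ hg
    have hsq : orderOf (g ^ 2) = 2 := by rw [orderOf_pow_of_dvd two_ne_zero (by omega), hg]
    exact h2.not_gt (numOrderTwo_pos_iff.2 ⟨_, hsq⟩)
  have := card_eq_of_forall_orderOf_le_four h4
  omega

theorem card_le_eight_of_numOrderThree_eq_zero (h4 : ∀ g : G, orderOf g ≤ 4)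
    (h2 : numOrderTwo G ≤ 2) (h3 : numOrderThree G = 0) : Fintype.card G ≤ 8 := by
  by_contra! hcard
  have hpow (g : G) : g ^ 4 = 1 := by
    have hne : orderOf g ≠ 3 := fun h ↦ h3.not_gt (numOrderThree_pos_iff.2 ⟨g, h⟩)
    have hpos := orderOf_pos g
    have hle := h4 g
    rw [← orderOf_dvd_iff_pow_eq_one]
    interval_cases orderOf g <;> simp_all
  obtain ⟨x, hx⟩ : ∃ x : G, orderOf x = 4 := by
    have hpos : 0 < #{g : G | orderOf g = 4} := by
      have := card_eq_of_forall_orderOf_le_four h4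
      omega
    obtain ⟨x, hx⟩ := card_pos.1 hpos
    exact ⟨x, (mem_filter.1 hx).2⟩
  have hsq : orderOf (x ^ 2) = 2 := by rw [orderOf_pow_of_dvd two_ne_zero (by omega), hx]
  have hunique (g : G) (hg : g ^ 2 = 1) : g = 1 ∨ g = x ^ 2 := or_iff_not_imp_left.2 fun hg1 ↦
    eq_of_orderOf_eq_two_of_numOrderTwo_le_two h2 (orderOf_eq_prime hg hg1) hsq
  have := card_le_eight_of_unique_involution hpow hunique
  rw [Nat.card_eq_fintype_card] at this
  omega

theorem exists_card_eq_two_pow_mul_three_pow (h4 : ∀ g : G, orderOf g ≤ 4)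
    (h2 : 0 < numOrderTwo G) (h3 : 0 < numOrderThree G) :
    ∃ a b : ℕ, Fintype.card G = 2 ^ a * 3 ^ b ∧ 2 ^ a ≤ numOrderThree G ∧
      3 ^ b ≤ numOrderTwo G := by
  obtain ⟨s, hs⟩ := numOrderTwo_pos_iff.1 h2
  obtain ⟨t, ht⟩ := numOrderThree_pos_iff.1 h3
  obtain ⟨P⟩ : Nonempty (Sylow 2 G) := inferInstance
  obtain ⟨Q⟩ : Nonempty (Sylow 3 G) := inferInstance
  have hP : Nat.card P ≤ #{g : G | orderOf g = orderOf t} :=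
    card_le_card_filter_orderOf_eq <| disjoint_centralizer_of_forall_orderOf_lt P.isPGroup'
      (by rw [ht]; decide) fun g ↦ (h4 g).trans_lt (by omega)
  have hQ : Nat.card Q ≤ #{g : G | orderOf g = orderOf s} :=
    card_le_card_filter_orderOf_eq <| disjoint_centralizer_of_forall_orderOf_lt Q.isPGroup'
      (by rw [hs]; decide) fun g ↦ (h4 g).trans_lt (by omega)
  rw [ht, P.card_eq_multiplicity] at hP
  rw [hs, Q.card_eq_multiplicity] at hQ
  refine ⟨_, _, ?_, hP, hQ⟩
  rw [← Nat.card_eq_fintype_card, ← P.card_eq_multiplicity, ← Q.card_eq_multiplicity]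
  exact card_eq_card_sylow_mul_card_sylow (by norm_num)
    (primeFactors_card_subset_of_forall_orderOf_le_four h4) P Q

/-- By `four_mul_card_add_le_sum_orderOf`, the conclusion implies `19|G| < 5ψ(G)`. It is tight:
for `|G| = 432` the hypotheses allow `i₂ = 27` and `i₃ = 29`, and `15 + 10 * 27 + 5 * 29 = 430`. -/
theorem lt_card_of_forall_orderOf_le_four (h4 : ∀ g : G, orderOf g ≤ 4)
    (h2 : 16 * numOrderTwo G ≤ Fintype.card G)
    (h3 : 14 * (numOrderThree G + 1) ≤ Fintype.card G) :
    15 + 10 * numOrderTwo G + 5 * numOrderThree G < Fintype.card G := by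
  rcases Nat.eq_zero_or_pos (numOrderTwo G) with hi₂ | hi₂
  · have := card_eq_numOrderThree_add_one_of_numOrderTwo_eq_zero h4 hi₂
    omega
  rcases Nat.eq_zero_or_pos (numOrderThree G) with hi₃ | hi₃
  · have : ¬ numOrderTwo G ≤ 2 := fun hle ↦ by
      have := card_le_eight_of_numOrderThree_eq_zero h4 hle hi₃
      omega
    omega
  · obtain ⟨a, b, hcard, ha, hb⟩ := exists_card_eq_two_pow_mul_three_pow h4 hi₂ hi₃
    obtain ⟨k, hk⟩ : 2 ^ 4 * 3 ^ 3 ∣ Fintype.card G := by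
      rw [hcard]
      exact two_pow_four_mul_three_pow_three_dvd (by omega) (by omega)
    obtain rfl | hk2 : k = 1 ∨ 2 ≤ k := by omega
    all_goals omega

end OrdersAtMostFour

theorem nineteen_mul_card_lt_five_mul_sum_orderOf {G : Type*} [Group G] [Fintype G]
    (h2 : 16 * numOrderTwo G ≤ Fintype.card G)
    (h3 : 14 * (numOrderThree G + 1) ≤ Fintype.card G) :
    19 * Fintype.card G < 5 * ∑ g : G, orderOf g := by
  have hsum := four_mul_card_add_le_sum_orderOf (G := G)
  by_cases h4 : ∀ g : G, orderOf g ≤ 4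
  · have := lt_card_of_forall_orderOf_le_four h4 h2 h3
    omega
  · push Not at h4
    obtain ⟨x, hx⟩ := h4
    have := two_le_card_filter_le_orderOf (k := 5) (by norm_num) hx
    omega

theorem avgOrder_gt_of_few_small_order_general {G : Type*} [Group G] [Fintype G]
    (h2 : (numOrderTwo G : ℚ) ≤ (Fintype.card G : ℚ) / 16)
    (h3 : (numOrderThree G : ℚ) + 1 ≤ (Fintype.card G : ℚ) / 14) :
    19 / 5 < avgOrder G := by
  have h2' : 16 * numOrderTwo G ≤ Fintype.card G := by
    rw [le_div_iff₀' (by norm_num)] at h2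
    exact_mod_cast h2
  have h3' : 14 * (numOrderThree G + 1) ≤ Fintype.card G := by
    rw [le_div_iff₀' (by norm_num)] at h3
    exact_mod_cast h3
  have hcard : (0 : ℚ) < Fintype.card G := by exact_mod_cast Fintype.card_pos
  rw [avgOrder, div_lt_div_iff₀ (by norm_num) hcard, mul_comm _ (5 : ℚ)]
  exact_mod_cast nineteen_mul_card_lt_five_mul_sum_orderOf h2' h3'

theorem avgOrder_gt_of_few_small_order {G : Type*} [Group G] [Fintype G]
    (hns : ¬ IsSolvable G)
    (h2 : (numOrderTwo G : ℚ) ≤ (Fintype.card G : ℚ) / 16)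
    (h3 : (numOrderThree G : ℚ) + 1 ≤ (Fintype.card G : ℚ) / 14) :
    19 / 5 < avgOrder G :=
  avgOrder_gt_of_few_small_order_general h2 h3
end

section
/- Let n ≥ 5 be a natural number and let A_n denote the alternating group on n letters. Then either n = 5 or o(A_n) ≥ 71/20. -/
/-!
The order of a permutation is at least the length of its cycle through a fixed point `a`. Among the
even permutations of `n` letters each of the lengths `1, …, n - 2` is equally likely, with
probability `1 / n`: deleting `a` from its cycle shortens that cycle by one and flips the sign, so
the count follows by induction as long as at least two letters remain outside the cycle. The other
two `n`-ths of `A_n` have a cycle of length at least `n - 1` through `a`, which gives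
`o(A_n) ≥ (n - 1)(n + 2) / (2n)`. This suffices from `n = 7` on. For `n = 6` it only gives `10 / 3`,
and one counts instead the `144` elements of cycle type `5` and the `90` of cycle type `4 + 2`,
all other nontrivial elements having order at least `2`.
-/

open Equiv Finset MulAction
open scoped Nat

theorem le_avgOrder_iff {G : Type*} [Group G] [Fintype G] {c : ℚ} :
    c ≤ avgOrder G ↔ c * Fintype.card G ≤ ∑ x : G, (orderOf x : ℚ) :=
  le_div_iff₀ (Nat.cast_pos.2 Fintype.card_pos)

section Period

theorem period_permCongr {α β : Type*} (e : α ≃ β) (σ : Perm α) (a : α) :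
    period (e.permCongr σ) (e a) = period σ a := by
  have smul_eq_iff (k : ℕ) : e.permCongr σ ^ k • e a = e a ↔ σ ^ k • a = a := by
    rw [← e.permCongrHom_coe, ← map_pow]
    simp
  refine Nat.dvd_antisymm ?_ ?_
  · rw [← pow_smul_eq_iff_period_dvd, smul_eq_iff, pow_period_smul]
  · rw [← pow_smul_eq_iff_period_dvd, ← smul_eq_iff, pow_period_smul]

theorem period_optionCongr_none {β : Type*} (σ : Perm β) :
    period σ.optionCongr (none : Option β) = 1 :=
  period_eq_one_iff.2 rfl

variable {β : Type*} [DecidableEq β]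

theorem swap_mul_optionCongr_pow_succ_apply_none (σ : Perm β) (b : β) {j : ℕ}
    (hj : j < period σ b) :
    ((swap none (some b) * σ.optionCongr) ^ (j + 1)) none = some ((σ ^ j) b) := by
  induction j with
  | zero => simp
  | succ j ih =>
    have not_returned : σ ((σ ^ j) b) ≠ b := by
      rw [← Perm.mul_apply, ← pow_succ']
      exact pow_smul_ne_of_lt_period j.succ_pos hj
    rw [pow_succ', Perm.mul_apply, ih (by lia), pow_succ' σ]
    simp [swap_apply_of_ne_of_ne, not_returned]

theorem period_swap_mul_optionCongr {σ : Perm β} {b : β} (hb : 0 < period σ b) :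
    period (swap none (some b) * σ.optionCongr) (none : Option β) = period σ b + 1 := by
  set τ : Perm (Option β) := swap none (some b) * σ.optionCongr with hτ
  have returns : τ ^ (period σ b + 1) • (none : Option β) = none := by
    obtain ⟨m, hm⟩ : ∃ m, period σ b = m + 1 := Nat.exists_eq_add_one.2 hb
    have σ_returns : σ ((σ ^ m) b) = b := by
      rw [← Perm.mul_apply, ← pow_succ', ← hm]
      exact pow_period_smul σ b
    rw [hm, Perm.smul_def, pow_succ', Perm.mul_apply,
      swap_mul_optionCongr_pow_succ_apply_none σ b (by lia)]
    simp [hτ, σ_returns]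
  refine le_antisymm (period_le_of_fixed (Nat.succ_pos _) returns)
    (le_period (period_pos_of_fixed (Nat.succ_pos _) returns) fun k hk hlt => ?_)
  obtain ⟨j, rfl⟩ := Nat.exists_eq_add_one.2 hk
  rw [Perm.smul_def, swap_mul_optionCongr_pow_succ_apply_none σ b (by lia)]
  exact Option.some_ne_none _

end Period

section Counting

variable {α β : Type*} [Fintype α] [DecidableEq α] [Fintype β] [DecidableEq β]

theorem two_mul_card_filter_sign_eq [Nontrivial α] (s : ℤˣ) :
    2 * #{σ : Perm α | σ.sign = s} = (Fintype.card α)! := by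
  rw [MonoidHom.card_fiber_eq_of_mem_range Perm.sign (Perm.sign_surjective α s)
    (Perm.sign_surjective α 1), ← Fintype.card_perm, ← two_mul_card_alternatingGroup,
    Fintype.card_of_subtype]
  simp [Perm.mem_alternatingGroup]

theorem card_filter_perm_option (p : Perm (Option β) → Prop) [DecidablePred p] :
    #{τ | p τ} = #{σ : Perm β | p σ.optionCongr} +
      ∑ b : β, #{σ : Perm β | p (swap none (some b) * σ.optionCongr)} := by
  simp only [card_filter]
  rw [← Perm.decomposeOption.symm.sum_comp, Fintype.sum_prod_type, Fintype.sum_option]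
  simp [← Perm.one_def]

/-- The permutations of sign `s` whose cycle through `a` has length `k`. The sign is a parameter,
rather than being fixed to `1`, because deleting `a` from its cycle flips it. -/
noncomputable def permsOfSignOfPeriod (s : ℤˣ) (k : ℕ) (a : α) : Finset (Perm α) :=
  {σ | σ.sign = s ∧ period σ a = k}

theorem card_permsOfSignOfPeriod_equiv (e : α ≃ β) (s : ℤˣ) (k : ℕ) (a : α) :
    #(permsOfSignOfPeriod s k (e a)) = #(permsOfSignOfPeriod s k a) :=
  (card_bijective e.permCongr e.permCongr.bijective fun σ => by
    simp [permsOfSignOfPeriod, period_permCongr]).symm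

theorem card_permsOfSignOfPeriod_one_none (s : ℤˣ) :
    #(permsOfSignOfPeriod s 1 (none : Option β)) = #{σ : Perm β | σ.sign = s} := by
  have period_swap_ne_one (σ : Perm β) (b : β) :
      period (swap none (some b) * σ.optionCongr) (none : Option β) ≠ 1 := by
    simp [period_eq_one_iff, Perm.smul_def]
  rw [permsOfSignOfPeriod, card_filter_perm_option]
  simp [period_optionCongr_none, period_swap_ne_one]

theorem card_permsOfSignOfPeriod_succ_none (s : ℤˣ) {k : ℕ} (hk : k ≠ 0) :
    #(permsOfSignOfPeriod s (k + 1) (none : Option β)) =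
      ∑ b : β, #(permsOfSignOfPeriod (-s) k b) := by
  have period_swap (σ : Perm β) (b : β) :
      period (swap none (some b) * σ.optionCongr) (none : Option β) = period σ b + 1 :=
    period_swap_mul_optionCongr (period_pos_of_orderOf_pos (orderOf_pos σ) b)
  simp only [permsOfSignOfPeriod]
  rw [card_filter_perm_option]
  simp [period_optionCongr_none, period_swap, hk, neg_eq_iff_eq_neg]

end Counting

theorem two_mul_card_permsOfSignOfPeriod {α : Type*} [Fintype α] [DecidableEq α] (s : ℤˣ) {k : ℕ}
    (a : α) (hk : k + 3 ≤ Fintype.card α) :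
    2 * #(permsOfSignOfPeriod s (k + 1) a) = (Fintype.card α - 1)! := by
  have card_compl : Fintype.card {b // b ≠ a} = Fintype.card α - 1 := by simp
  rw [← card_permsOfSignOfPeriod_equiv (optionSubtypeNe a).symm, optionSubtypeNe_symm_self]
  induction k generalizing α s with
  | zero =>
    have : Nontrivial {b // b ≠ a} := Fintype.one_lt_card_iff_nontrivial.1 (by lia)
    rw [card_permsOfSignOfPeriod_one_none, two_mul_card_filter_sign_eq, card_compl]
  | succ k ih =>
    have fiber (b : {b // b ≠ a}) :
        2 * #(permsOfSignOfPeriod (-s) (k + 1) b) = (Fintype.card α - 1 - 1)! := by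
      rw [← card_permsOfSignOfPeriod_equiv (optionSubtypeNe b).symm, optionSubtypeNe_symm_self,
        ih _ b (by lia) (by simp), card_compl]
    rw [card_permsOfSignOfPeriod_succ_none s k.succ_ne_zero, mul_sum,
      sum_congr rfl fun b _ => fiber b, sum_const, card_univ, card_compl, smul_eq_mul,
      Nat.mul_factorial_pred (by lia)]

theorem card_mul_card_filter_alternatingGroup_period_eq {α : Type*} [Fintype α] [DecidableEq α]
    {k : ℕ} (a : α) (hk : k + 3 ≤ Fintype.card α) :
    Fintype.card α * #{g : alternatingGroup α | period (g : Perm α) a = k + 1} =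
      Fintype.card (alternatingGroup α) := by
  have : Nontrivial α := Fintype.one_lt_card_iff_nontrivial.1 (by lia)
  have fiber_eq : #{g : alternatingGroup α | period (g : Perm α) a = k + 1} =
      #(permsOfSignOfPeriod 1 (k + 1) a) := by
    rw [← card_map (Function.Embedding.subtype _)]
    congr 1
    ext σ
    simp [permsOfSignOfPeriod, Perm.mem_alternatingGroup, and_comm]
  apply Nat.eq_of_mul_eq_mul_left two_pos
  rw [fiber_eq, mul_left_comm, two_mul_card_permsOfSignOfPeriod 1 a hk,
    Nat.mul_factorial_pred (by lia), two_mul_card_alternatingGroup, Fintype.card_perm]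

theorem succ_mul_card_le_of_card_fiber_eq {ι : Type*} [Fintype ι] {f : ι → ℕ} {m : ℕ} {c : ℚ}
    (hf : ∀ i, 0 < f i) (hc : ∀ j < m, (#{i | f i = j + 1} : ℚ) = c) :
    ((m + 1) * Fintype.card ι : ℚ) ≤ ∑ i, (f i : ℚ) + m * (m + 1) / 2 * c := by
  have pointwise (i : ι) :
      (m + 1 : ℚ) ≤ f i + ∑ j ∈ range m, (m - j : ℚ) * if f i = j + 1 then 1 else 0 := by
    obtain ⟨p, hp⟩ := Nat.exists_eq_add_one.2 (hf i)
    simp only [hp, Nat.add_right_cancel_iff, mul_ite, mul_one, mul_zero, sum_ite_eq, mem_range]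
    split_ifs with hpm
    · push_cast; linarith
    · have : (m : ℚ) ≤ p := mod_cast not_lt.1 hpm
      push_cast; linarith
  have sum_deficits : ∑ j ∈ range m, (m - j : ℚ) = m * (m + 1) / 2 := by
    have gauss : ∑ j ∈ range m, (j : ℚ) = m * (m - 1) / 2 := by
      rw [← Nat.cast_sum, sum_range_id, ← Nat.choose_two_right, Nat.cast_choose_two]
    rw [sum_sub_distrib, gauss, sum_const, card_range, nsmul_eq_mul]
    ring
  calc ((m + 1) * Fintype.card ι : ℚ) = ∑ _i : ι, (m + 1 : ℚ) := by
        simp [mul_comm, mul_add]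
    _ ≤ ∑ i, (f i + ∑ j ∈ range m, (m - j : ℚ) * if f i = j + 1 then 1 else 0) :=
      sum_le_sum fun i _ => pointwise i
    _ = ∑ i, (f i : ℚ) + ∑ j ∈ range m, (m - j : ℚ) * #{i | f i = j + 1} := by
      rw [sum_add_distrib, sum_comm]
      simp only [← mul_sum, sum_boole]
    _ = ∑ i, (f i : ℚ) + ∑ j ∈ range m, (m - j : ℚ) * c := by
      congr 1
      exact sum_congr rfl fun j hj => by rw [hc j (mem_range.1 hj)]
    _ = ∑ i, (f i : ℚ) + m * (m + 1) / 2 * c := by rw [← sum_mul, sum_deficits]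

theorem le_avgOrder_alternatingGroup {α : Type*} [Fintype α] [DecidableEq α] [Nontrivial α] :
    ((Fintype.card α - 1) * (Fintype.card α + 2) / (2 * Fintype.card α) : ℚ) ≤
      avgOrder (alternatingGroup α) := by
  obtain ⟨a⟩ : Nonempty α := inferInstance
  obtain ⟨m, hm⟩ : ∃ m, Fintype.card α = m + 2 :=
    Nat.exists_eq_add_of_le' Fintype.one_lt_card
  have fiber (j : ℕ) (hj : j < m) :
      (#{g : alternatingGroup α | period (g : Perm α) a = j + 1} : ℚ) =
        Fintype.card (alternatingGroup α) / (m + 2) := by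
    rw [eq_div_iff (by positivity), mul_comm,
      ← card_mul_card_filter_alternatingGroup_period_eq a (show j + 3 ≤ _ by lia), hm]
    push_cast
    rfl
  have period_le (g : alternatingGroup α) : period (g : Perm α) a ≤ orderOf g :=
    Subgroup.orderOf_coe g ▸ period_le_orderOf (orderOf_pos _) a
  have sum_period_le : ∑ g : alternatingGroup α, (period (g : Perm α) a : ℚ) ≤
      ∑ g : alternatingGroup α, (orderOf g : ℚ) :=
    sum_le_sum fun g _ => mod_cast period_le g
  have sum_period_ge := succ_mul_card_le_of_card_fiber_eq
    (fun g : alternatingGroup α => period_pos_of_orderOf_pos (orderOf_pos (g : Perm α)) a) fiber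
  rw [le_avgOrder_iff, hm]
  calc _ = ((m + 1) * Fintype.card (alternatingGroup α) : ℚ) -
        m * (m + 1) / 2 * (Fintype.card (alternatingGroup α) / (m + 2)) := by
        push_cast
        field_simp
        ring
    _ ≤ ∑ g : alternatingGroup α, (orderOf g : ℚ) := by linarith

section SixLetters

variable {α : Type*} [Fintype α] [DecidableEq α]

theorem two_add_ite_cycleType_le_orderOf_add_ite (σ : Perm α) :
    2 + (3 * (if σ.cycleType = {5} then 1 else 0) + 2 * if σ.cycleType = {4, 2} then 1 else 0) ≤
      orderOf σ + if σ = 1 then 1 else 0 := by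
  have lcm_five : ({5} : Multiset ℕ).lcm = 5 := by decide
  have lcm_four_two : ({4, 2} : Multiset ℕ).lcm = 4 := by decide
  have order_eq_lcm := σ.lcm_cycleType
  by_cases h_five : σ.cycleType = {5}
  · rw [h_five, lcm_five] at order_eq_lcm
    simp [h_five, ← order_eq_lcm]
  by_cases h_four_two : σ.cycleType = {4, 2}
  · rw [h_four_two, lcm_four_two] at order_eq_lcm
    rw [if_neg h_five, if_pos h_four_two, ← order_eq_lcm]
    lia
  have order_pos := orderOf_pos σ
  have order_eq_one_iff := orderOf_eq_one_iff (x := σ)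
  simp only [h_five, h_four_two, if_false]
  split_ifs <;> grind

theorem le_avgOrder_alternatingGroup_of_card_eq_six (hα : Fintype.card α = 6) :
    1331 / 360 ≤ avgOrder (alternatingGroup α) := by
  have : Nontrivial α := Fintype.one_lt_card_iff_nontrivial.1 (by lia)
  have card_group : Fintype.card (alternatingGroup α) = 360 := by
    rw [card_alternatingGroup, hα]
    rfl
  have card_five : #{g : alternatingGroup α | (g : Perm α).cycleType = {5}} = 144 := by
    rw [AlternatingGroup.card_of_cycleType, hα]
    decide
  have card_four_two : #{g : alternatingGroup α | (g : Perm α).cycleType = {4, 2}} = 90 := by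
    rw [AlternatingGroup.card_of_cycleType, hα]
    decide
  have sum_bound := sum_le_sum fun (g : alternatingGroup α) (_ : g ∈ univ) =>
    two_add_ite_cycleType_le_orderOf_add_ite (g : Perm α)
  simp only [sum_add_distrib, ← mul_sum, sum_boole, sum_const, card_univ, smul_eq_mul, card_group,
    card_five, card_four_two, Subgroup.orderOf_coe, OneMemClass.coe_eq_one, filter_eq', mem_univ,
    if_true, card_singleton, Nat.cast_id] at sum_bound
  have sum_order_ge : (1331 : ℚ) ≤ ∑ g : alternatingGroup α, (orderOf g : ℚ) := by
    exact_mod_cast (by lia : 1331 ≤ ∑ g : alternatingGroup α, orderOf g)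
  rw [le_avgOrder_iff, card_group]
  push_cast
  linarith

end SixLetters

theorem alternating_avgOrder_general {α : Type*} [Fintype α] [DecidableEq α]
    (hα : 5 ≤ Fintype.card α) :
    Fintype.card α = 5 ∨ 71 / 20 ≤ avgOrder (alternatingGroup α) := by
  rcases (by lia : Fintype.card α = 5 ∨ Fintype.card α = 6 ∨ 7 ≤ Fintype.card α) with
    h_five | h_six | h_seven
  · exact Or.inl h_five
  · exact Or.inr (le_trans (by norm_num) (le_avgOrder_alternatingGroup_of_card_eq_six h_six))
  · have : Nontrivial α := Fintype.one_lt_card_iff_nontrivial.1 (by lia)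
    have seven_le : (7 : ℚ) ≤ Fintype.card α := mod_cast h_seven
    refine Or.inr (le_trans ?_ le_avgOrder_alternatingGroup)
    rw [le_div_iff₀ (by positivity)]
    nlinarith

theorem alternating_avgOrder (n : ℕ) (hn : 5 ≤ n) :
    n = 5 ∨ 71 / 20 ≤ avgOrder (alternatingGroup (Fin n)) := by
  simpa using alternating_avgOrder_general (α := Fin n) (by simpa using hn)
end

section
/- Let F be a finite field with |F| ≥ 4, let G = PSL(2, F) be the projective special linear group of degree 2 over F, and suppose that every prime dividing |G| belongs to {2, 3, 5, 7, 11, 13}. Then either G is isomorphic to the alternating group A_5, or o(G) ≥ 71/20. -/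
/-- `PSL(2, F)`: the projective special linear group of degree 2 over `F`,
i.e. the quotient of `SL(2, F)` by its center. -/
abbrev PSL2 (F : Type*) [Field F] :=
  Matrix.SpecialLinearGroup (Fin 2) F ⧸ Subgroup.center (Matrix.SpecialLinearGroup (Fin 2) F)

/-!
Write `q = |F|`. A non-central `g ∈ SL(2, F)` whose `n`-th power is central satisfies
`S_{n-1}(tr g) = 0`, where `S` denotes the rescaled Chebyshev polynomials of the second kind.
So the elements whose image in `PSL(2, F)` has order `2`, `3` or `4` have trace `t` with `t = 0`,
`t² = 1` or `t² = 2`. At most `q² + q` elements of `SL(2, F)` have a given trace, so among the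
`q³ - q` elements those of small order are rare, and the average order is at least
`5 - 9 / (q - 1) - 8 / (q³ - q)`.
This exceeds `71 / 20` for `q ≥ 8`. For `q = 7` the bound improves because `168` is prime to `5`.

For `q = 4` and `q = 5` the group is simple of order `60`. Such a group acts on its six Sylow
`5`-subgroups as a subgroup of index `6` in `A₆`, and the action of `A₆` on the cosets of that
subgroup identifies it with `A₅`.
-/

open Equiv MulAction Matrix Polynomial
open scoped MatrixGroups

section SimpleGroups

variable {G H : Type*} [Group G] [Group H] [IsSimpleGroup G]

lemma injective_of_ker_ne_top {f : G →* H} (hf : f.ker ≠ ⊤) : Function.Injective f :=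
  f.ker_eq_bot_iff.mp (f.normal_ker.eq_bot_or_eq_top.resolve_right hf)

lemma range_le_alternatingGroup_of_isSimpleGroup {α : Type*} [Fintype α] [DecidableEq α]
    (hG : 2 < Nat.card G) (f : G →* Perm α) : f.range ≤ alternatingGroup α := by
  have hker : (Perm.sign.comp f).ker = ⊤ := by
    by_contra h
    have hle := Nat.card_le_card_of_injective _ (injective_of_ker_ne_top h)
    rw [Nat.card_eq_fintype_card (α := ℤˣ), Fintype.card_units_int] at hle
    omega
  rintro _ ⟨g, rfl⟩
  have hg : g ∈ (Perm.sign.comp f).ker := hker ▸ Subgroup.mem_top g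
  exact Perm.mem_alternatingGroup.mpr hg

lemma faithfulSMul_quotient_of_isSimpleGroup {K : Subgroup G} (hK : K ≠ ⊤) :
    FaithfulSMul G (G ⧸ K) := by
  have hinj : Function.Injective (toPermHom G (G ⧸ K)) := by
    refine injective_of_ker_ne_top fun hker ↦ hK (top_le_iff.mp ?_)
    rw [← hker, ← Subgroup.normalCore_eq_ker]
    exact K.normalCore_le
  exact ⟨fun h ↦ hinj (Equiv.ext h)⟩

end SimpleGroups

section AlternatingGroup

lemma nonempty_mulEquiv_alternatingGroup_of_injective {G α : Type*} [Group G] [Fintype α]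
    [DecidableEq α] {f : G →* Perm α} (hf : Function.Injective f)
    (hG : 2 * Nat.card G = (Nat.card α).factorial) :
    Nonempty (G ≃* alternatingGroup α) := by
  have hindex : f.range.index = 2 := by
    have h := f.range.card_mul_index
    rw [Nat.card_congr (f.ofInjective hf).toEquiv.symm, Nat.card_perm, ← hG, mul_comm] at h
    exact Nat.eq_of_mul_eq_mul_right (Nat.pos_of_ne_zero fun h0 ↦
      (Nat.card α).factorial_ne_zero (by rw [← hG, h0])) h
  exact ⟨(f.ofInjective hf).trans
    (MulEquiv.subgroupCongr (Perm.eq_alternatingGroup_of_index_eq_two hindex))⟩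

lemma injective_toPermHom_ofStabilizer {K β : Type*} [Group K] [MulAction K β] [FaithfulSMul K β]
    (b : β) :
    Function.Injective (toPermHom (stabilizer K b) (SubMulAction.ofStabilizer K b)) := by
  rw [injective_iff_map_eq_one]
  intro k hk
  refine Subtype.ext (eq_of_smul_eq_smul (α := β) fun x ↦ ?_)
  rw [OneMemClass.coe_one, one_smul]
  by_cases hx : x = b
  · exact hx ▸ k.2
  · exact congrArg Subtype.val (DFunLike.congr_fun hk ⟨x, hx⟩)

/- `H` fixes one of its own `n + 1` cosets, hence acts faithfully on the other `n`. It need not fix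
a point of `α`: for `n = 5` the outer automorphism of `A₆` exchanges two classes of such `H`. -/
lemma nonempty_mulEquiv_alternatingGroup_of_index_eq_card {α : Type*} [Fintype α] [DecidableEq α]
    {n : ℕ} (hn : 4 ≤ n) (hα : Nat.card α = n + 1) {H : Subgroup (alternatingGroup α)}
    (hH : H.index = n + 1) : Nonempty (H ≃* alternatingGroup (Fin n)) := by
  classical
  have hsimple : IsSimpleGroup (alternatingGroup α) := alternatingGroup.isSimpleGroup (by omega)
  have hfaithful : FaithfulSMul (alternatingGroup α) (alternatingGroup α ⧸ H) :=
    faithfulSMul_quotient_of_isSimpleGroup fun h ↦ by rw [h, Subgroup.index_top] at hH; omega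
  let coset : alternatingGroup α ⧸ H := ((1 : alternatingGroup α) : alternatingGroup α ⧸ H)
  have hstab : H = stabilizer (alternatingGroup α) coset := (stabilizer_quotient H).symm
  have hcosets : Nat.card (SubMulAction.ofStabilizer (alternatingGroup α) coset) = n := by
    have h := SubMulAction.nat_card_ofStabilizer_add_one_eq (alternatingGroup α) coset
    rw [← Subgroup.index_eq_card, hH] at h
    omega
  have hcard : 2 * Nat.card H = n.factorial := by
    have : Nontrivial α := Finite.one_lt_card_iff_nontrivial.mp (by omega)
    have h := two_mul_nat_card_alternatingGroup (α := α)
    rw [Nat.card_perm, hα, ← H.card_mul_index, hH, Nat.factorial_succ, ← mul_assoc,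
      mul_comm (n + 1)] at h
    exact Nat.eq_of_mul_eq_mul_right n.succ_pos h
  obtain ⟨e⟩ := nonempty_mulEquiv_alternatingGroup_of_injective
    (injective_toPermHom_ofStabilizer coset) (by rw [hcosets, ← hcard, stabilizer_quotient])
  exact ⟨(MulEquiv.subgroupCongr hstab).trans <| e.trans <|
    Equiv.altCongrHom (Finite.equivFinOfCardEq hcosets)⟩

end AlternatingGroup

section Sylow

variable {G : Type*} [Group G] [IsSimpleGroup G] [Finite G] {p : ℕ} [Fact p.Prime]

lemma card_sylow_ne_one_of_isSimpleGroup (hp : p ∣ Nat.card G) (hG : ¬ IsPGroup p G) :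
    Nat.card (Sylow p G) ≠ 1 := by
  intro hone
  have : Subsingleton (Sylow p G) := (Nat.card_eq_one_iff_unique.mp hone).1
  let P : Sylow p G := default
  have hP : (P : Subgroup G) = ⊤ :=
    P.normal_of_subsingleton.eq_bot_or_eq_top.resolve_left (P.ne_bot_of_dvd_card hp)
  have htop : IsPGroup p (⊤ : Subgroup G) := hP ▸ P.isPGroup'
  exact hG (htop.of_equiv Subgroup.topEquiv)

lemma injective_toPermHom_sylow_of_isSimpleGroup (hG : Nat.card (Sylow p G) ≠ 1) :
    Function.Injective (toPermHom G (Sylow p G)) := by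
  refine injective_of_ker_ne_top fun hker ↦
    hG (Nat.card_eq_one_iff_unique.mpr ⟨⟨fun P Q ↦ ?_⟩, inferInstance⟩)
  obtain ⟨g, rfl⟩ := exists_smul_eq G P Q
  have hg : g ∈ (toPermHom G (Sylow p G)).ker := hker ▸ Subgroup.mem_top g
  exact (DFunLike.congr_fun (MonoidHom.mem_ker.mp hg) P).symm

end Sylow

section OrderSixty

variable {G : Type*} [Group G] [IsSimpleGroup G]

lemma card_sylow_five_of_card_eq_sixty (hG : Nat.card G = 60) : Nat.card (Sylow 5 G) = 6 := by
  have : Finite G := Nat.finite_of_card_ne_zero (by omega)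
  have : Fact (Nat.Prime 5) := ⟨Nat.prime_five⟩
  have hpgroup : ¬ IsPGroup 5 G := fun h ↦ by
    obtain ⟨n, hn⟩ := IsPGroup.iff_card.mp h
    have h3 : 3 ∣ 5 ^ n := hn ▸ hG ▸ (by norm_num)
    exact absurd (Nat.prime_three.dvd_of_dvd_pow h3) (by norm_num)
  have hne : Nat.card (Sylow 5 G) ≠ 1 :=
    card_sylow_ne_one_of_isSimpleGroup (hG ▸ (by norm_num)) hpgroup
  have hmod : Nat.card (Sylow 5 G) % 5 = 1 := card_sylow_modEq_one 5 G
  have hdvd : Nat.card (Sylow 5 G) ∣ 60 :=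
    hG ▸ (Sylow.card_dvd_index default).trans (Subgroup.index_dvd_card _)
  have hle : Nat.card (Sylow 5 G) ≤ 60 := Nat.le_of_dvd (by norm_num) hdvd
  interval_cases Nat.card (Sylow 5 G) <;> omega

theorem nonempty_mulEquiv_alternatingGroup_of_card_eq_sixty (hG : Nat.card G = 60) :
    Nonempty (G ≃* alternatingGroup (Fin 5)) := by
  classical
  have : Finite G := Nat.finite_of_card_ne_zero (by omega)
  have : Fact (Nat.Prime 5) := ⟨Nat.prime_five⟩
  have : Fintype (Sylow 5 G) := Fintype.ofFinite _
  have hsyl : Nat.card (Sylow 5 G) = 6 := card_sylow_five_of_card_eq_sixty hG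
  let conj := toPermHom G (Sylow 5 G)
  let toAlt := conj.codRestrict (alternatingGroup _) fun g ↦
    range_le_alternatingGroup_of_isSimpleGroup (by omega) conj ⟨g, rfl⟩
  have htoAlt : Function.Injective toAlt := by
    refine (MonoidHom.injective_codRestrict conj _ _).mpr ?_
    exact injective_toPermHom_sylow_of_isSimpleGroup (by omega)
  have hindex : toAlt.range.index = 6 := by
    have : Nontrivial (Sylow 5 G) := Finite.one_lt_card_iff_nontrivial.mp (by omega)
    have halt := two_mul_nat_card_alternatingGroup (α := Sylow 5 G)
    rw [Nat.card_perm, hsyl, ← toAlt.range.card_mul_index,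
      Nat.card_congr (toAlt.ofInjective htoAlt).toEquiv.symm, hG,
      show Nat.factorial 6 = 720 from rfl] at halt
    omega
  obtain ⟨e⟩ :=
    nonempty_mulEquiv_alternatingGroup_of_index_eq_card (n := 5) (by norm_num) hsyl hindex
  exact ⟨(toAlt.ofInjective htoAlt).trans e⟩

end OrderSixty

section Cardinality

lemma ker_det_eq_range_toGL (n R : Type*) [Fintype n] [DecidableEq n] [CommRing R] :
    (GeneralLinearGroup.det : GL n R →* Rˣ).ker =
      (SpecialLinearGroup.toGL : SpecialLinearGroup n R →* GL n R).range := by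
  ext A
  rw [MonoidHom.mem_ker, MonoidHom.mem_range]
  constructor
  · exact fun h ↦ ⟨⟨A, congrArg Units.val h⟩, Units.ext rfl⟩
  · rintro ⟨g, rfl⟩
    exact Units.ext g.2

lemma card_SL_mul_card_units (n R : Type*) [Fintype n] [DecidableEq n] [Nonempty n] [CommRing R] :
    Nat.card (SpecialLinearGroup n R) * Nat.card Rˣ = Nat.card (GL n R) := by
  have h := (GeneralLinearGroup.det : GL n R →* Rˣ).ker.card_mul_index
  rwa [Subgroup.index_ker, MonoidHom.range_eq_top_of_surjective _ GeneralLinearGroup.det_surjective,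
    Subgroup.card_top, ker_det_eq_range_toGL,
    ← Nat.card_congr (MonoidHom.ofInjective SpecialLinearGroup.toGL_injective).toEquiv] at h

variable (F : Type*) [Field F] [Fintype F]

lemma card_SL_fin_two :
    Nat.card SL(2, F) = (Fintype.card F - 1) * Fintype.card F * (Fintype.card F + 1) := by
  have h := card_SL_mul_card_units (Fin 2) F
  rw [card_GL_field, Fin.prod_univ_two, Nat.card_units, Nat.card_eq_fintype_card (α := F)] at h
  obtain ⟨r, hr⟩ : ∃ r, Fintype.card F = r + 1 := ⟨_, (Nat.sub_add_cancel Fintype.card_pos).symm⟩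
  have hr0 : 0 < r := by have := Fintype.one_lt_card (α := F); omega
  have hrow₀ : (r + 1) ^ 2 - (r + 1) ^ 0 = r * (r + 2) := Nat.sub_eq_of_eq_add (by ring)
  have hrow₁ : (r + 1) ^ 2 - (r + 1) ^ 1 = r * (r + 1) := Nat.sub_eq_of_eq_add (by ring)
  rw [hr, Fin.val_zero, Fin.val_one, hrow₀, hrow₁, add_tsub_cancel_right] at h
  rw [hr, add_tsub_cancel_right]
  exact Nat.eq_of_mul_eq_mul_right hr0 (h.trans (by ring))

lemma card_center_SL (n : Type*) [Fintype n] [DecidableEq n] [Nonempty n] :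
    Nat.card (Subgroup.center (SpecialLinearGroup n F)) =
      (Fintype.card F - 1).gcd (Fintype.card n) := by
  have hroots : rootsOfUnity (Fintype.card n) F = (powMonoidHom (Fintype.card n)).ker := by
    ext ζ
    rfl
  rw [Nat.card_congr
    (SpecialLinearGroup.center_equiv_rootsOfUnity' (Classical.arbitrary n)).toEquiv, hroots,
    IsCyclic.card_powMonoidHom_ker, Nat.card_units, Nat.card_eq_fintype_card]

lemma card_PSL2_mul_gcd : Nat.card (PSL2 F) * (Fintype.card F - 1).gcd 2 =
    (Fintype.card F - 1) * Fintype.card F * (Fintype.card F + 1) := by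
  rw [← card_SL_fin_two, (Subgroup.center SL(2, F)).card_eq_card_quotient_mul_card_subgroup,
    card_center_SL, Fintype.card_fin]

end Cardinality

section AverageOrder

variable {G : Type*} [Group G] [Fintype G]

lemma card_filter_mk_eq (s : Subgroup G) [DecidableEq (G ⧸ s)] (x : G ⧸ s) :
    Finset.card {g : G | QuotientGroup.mk g = x} = Nat.card s := by
  rw [← Fintype.card_subtype, ← Nat.card_eq_fintype_card]
  exact (QuotientGroup.card_preimage_mk s {x}).trans
    (by rw [Nat.card_unique (α := ({x} : Set _)), mul_one])

lemma sum_comp_mk {M : Type*} [AddCommMonoid M] (s : Subgroup G) [Fintype (G ⧸ s)]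
    (f : G ⧸ s → M) : ∑ g : G, f (QuotientGroup.mk g) = Nat.card s • ∑ x, f x := by
  classical
  calc ∑ g : G, f (QuotientGroup.mk g)
      = ∑ x, ∑ g : G with QuotientGroup.mk g = x, f (QuotientGroup.mk g) :=
        (Finset.sum_fiberwise _ _ _).symm
    _ = ∑ x, ∑ g : G with QuotientGroup.mk g = x, f x := Finset.sum_congr rfl fun x _ ↦
        Finset.sum_congr rfl fun g hg ↦ congrArg f (Finset.mem_filter.mp hg).2
    _ = Nat.card s • ∑ x, f x := by
        simp only [Finset.sum_const, card_filter_mk_eq, Finset.smul_sum]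

lemma avgOrder_quotient (N : Subgroup G) [N.Normal] [Fintype (G ⧸ N)] :
    avgOrder (G ⧸ N) = (∑ g : G, (orderOf (g : G ⧸ N) : ℚ)) / Nat.card G := by
  have hN : (Nat.card N : ℚ) ≠ 0 := Nat.cast_ne_zero.mpr Nat.card_pos.ne'
  rw [sum_comp_mk N fun x ↦ (orderOf x : ℚ), nsmul_eq_mul,
    N.card_eq_card_quotient_mul_card_subgroup, Nat.cast_mul, mul_comm (Nat.card (G ⧸ N) : ℚ),
    mul_div_mul_left _ _ hN, Nat.card_eq_fintype_card, avgOrder]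

end AverageOrder

lemma mul_card_le_sum_add {ι : Type*} [Fintype ι] {f : ι → ℕ} (hf : ∀ i, 0 < f i) (k : ℕ) :
    k * Nat.card ι ≤
      ∑ i, f i + ∑ n ∈ Finset.Ico 1 k, (k - n) * Finset.card {i | f i = n} := by
  have hpoint (i : ι) : k ≤ f i + ∑ n ∈ Finset.Ico 1 k, if f i = n then k - n else 0 := by
    have hpos := hf i
    rw [Finset.sum_ite_eq]
    split_ifs with h
    · omega
    · rw [Finset.mem_Ico] at h
      omega
  calc k * Nat.card ι = ∑ _i : ι, k := by
        rw [Finset.sum_const, Finset.card_univ, smul_eq_mul, mul_comm, Nat.card_eq_fintype_card]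
    _ ≤ ∑ i, (f i + ∑ n ∈ Finset.Ico 1 k, if f i = n then k - n else 0) :=
        Finset.sum_le_sum fun i _ ↦ hpoint i
    _ = _ := by
        rw [Finset.sum_add_distrib, Finset.sum_comm]
        simp only [← Finset.sum_filter, Finset.sum_const, smul_eq_mul, mul_comm]

section Trace

lemma mul_self_eq_trace_smul_sub_one {R : Type*} [CommRing R] {A : Matrix (Fin 2) (Fin 2) R}
    (hA : A.det = 1) : A * A = A.trace • A - 1 := by
  rw [det_fin_two] at hA
  ext i j
  fin_cases i <;> fin_cases j <;> simp [mul_apply, trace_fin_two] <;> grind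

lemma pow_eq_eval_S_smul_sub {R : Type*} [CommRing R] {A : Matrix (Fin 2) (Fin 2) R}
    (hA : A.det = 1) (n : ℕ) :
    A ^ n = (Chebyshev.S R (n - 1)).eval A.trace • A -
      (Chebyshev.S R (n - 2)).eval A.trace • 1 := by
  induction n with
  | zero => simp
  | succ n ih =>
    have hrec := Chebyshev.S_add_two R (n - 2)
    rw [show (n : ℤ) - 2 + 2 = n by ring, show (n : ℤ) - 2 + 1 = n - 1 by ring] at hrec
    rw [pow_succ, ih, sub_mul, smul_mul_assoc, smul_mul_assoc, one_mul,
      mul_self_eq_trace_smul_sub_one hA, Nat.cast_succ, add_sub_cancel_right, hrec, eval_sub,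
      eval_mul, eval_X, show (n : ℤ) + 1 - 2 = n - 1 by ring]
    module

lemma eval_S_trace_eq_zero_of_pow_mem_center {F : Type*} [Field F] {g : SL(2, F)}
    (hg : g ∉ Subgroup.center SL(2, F)) {n : ℕ} (hn : g ^ n ∈ Subgroup.center SL(2, F)) :
    (Chebyshev.S F (n - 1)).eval g.1.trace = 0 := by
  by_contra hS
  refine hg (Subgroup.mem_center_iff.mpr fun h ↦ Subtype.ext ?_)
  have hcomm : h.1 * g.1 ^ n = g.1 ^ n * h.1 :=
    congrArg Subtype.val (Subgroup.mem_center_iff.mp hn h)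
  rw [pow_eq_eval_S_smul_sub g.2, mul_sub, sub_mul, mul_smul_comm, smul_mul_assoc, mul_smul_comm,
    smul_mul_assoc, mul_one, one_mul, sub_left_inj] at hcomm
  exact smul_right_injective _ hS hcomm

lemma sq_mem_center_of_trace_eq_zero {R : Type*} [CommRing R] {g : SL(2, R)}
    (hg : g.1.trace = 0) : g ^ 2 ∈ Subgroup.center SL(2, R) := by
  have hsq : g ^ 2 = -1 := Subtype.ext <| by
    simpa [hg, sq] using mul_self_eq_trace_smul_sub_one g.2
  rw [hsq]
  exact Subgroup.mem_center_iff.mpr fun h ↦ by rw [mul_neg_one, neg_one_mul]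

end Trace

section OrderOfMk

variable {F : Type*} [Field F] {g : SL(2, F)}

lemma orderOf_mk_eq_one_iff : orderOf (g : PSL2 F) = 1 ↔ g ∈ Subgroup.center SL(2, F) := by
  rw [orderOf_eq_one_iff, QuotientGroup.eq_one_iff]

lemma eval_S_trace_eq_zero_of_orderOf_mk_eq {n : ℕ} (hn : n ≠ 1)
    (hg : orderOf (g : PSL2 F) = n) : (Chebyshev.S F (n - 1)).eval g.1.trace = 0 := by
  refine eval_S_trace_eq_zero_of_pow_mem_center (mt orderOf_mk_eq_one_iff.mpr (hg ▸ hn)) ?_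
  rw [← QuotientGroup.eq_one_iff, QuotientGroup.mk_pow, ← hg]
  exact pow_orderOf_eq_one _

lemma trace_eq_zero_of_orderOf_mk_eq_two (hg : orderOf (g : PSL2 F) = 2) : g.1.trace = 0 := by
  simpa using eval_S_trace_eq_zero_of_orderOf_mk_eq (by norm_num) hg

lemma trace_sq_eq_one_of_orderOf_mk_eq_three (hg : orderOf (g : PSL2 F) = 3) :
    g.1.trace ^ 2 = 1 := by
  have h := eval_S_trace_eq_zero_of_orderOf_mk_eq (by norm_num) hg
  norm_num [Chebyshev.S_two] at h
  linear_combination h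

lemma chebyshev_S_three (R : Type*) [CommRing R] : Chebyshev.S R 3 = X * (X ^ 2 - 2) := by
  have h := Chebyshev.S_add_two R 1
  norm_num [Chebyshev.S_two] at h
  rw [h]
  ring

lemma trace_sq_eq_two_of_orderOf_mk_eq_four (hg : orderOf (g : PSL2 F) = 4) :
    g.1.trace ^ 2 = 2 := by
  have h := eval_S_trace_eq_zero_of_orderOf_mk_eq (by norm_num) hg
  norm_num [chebyshev_S_three] at h
  have htrace : g.1.trace ≠ 0 := fun h0 ↦ by
    have hsq : (g : PSL2 F) ^ 2 = 1 :=
      (QuotientGroup.eq_one_iff _).mpr (sq_mem_center_of_trace_eq_zero h0)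
    have hdvd := orderOf_dvd_of_pow_eq_one hsq
    rw [hg] at hdvd
    omega
  exact sub_eq_zero.mp (h.resolve_left htrace)

end OrderOfMk

section TraceCount

variable {F : Type*} [Field F] [Fintype F] [DecidableEq F]

lemma card_trace_eq_and_upper_right_ne_zero_le (t : F) :
    Finset.card {g : SL(2, F) | g.1.trace = t ∧ g.1 0 1 ≠ 0} ≤
      Fintype.card F * (Fintype.card F - 1) := by
  have hcard : (Finset.univ ×ˢ Finset.univ.erase (0 : F) : Finset (F × F)).card =
      Fintype.card F * (Fintype.card F - 1) := by
    rw [Finset.card_product, Finset.card_erase_of_mem (Finset.mem_univ _), Finset.card_univ]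
  rw [← hcard]
  refine Finset.card_le_card_of_injOn (fun g ↦ (g.1 0 0, g.1 0 1)) (fun g hg ↦ by simp_all) ?_
  intro g hg h hh hgh
  obtain ⟨hgt, hb⟩ := (Finset.mem_filter.mp hg).2
  obtain ⟨hht, -⟩ := (Finset.mem_filter.mp hh).2
  obtain ⟨ha, hb'⟩ := Prod.mk.inj hgh
  have hdet := g.2.trans h.2.symm
  rw [trace_fin_two] at hgt hht
  rw [det_fin_two, det_fin_two, ← ha, ← hb'] at hdet
  have hd : g.1 1 1 = h.1 1 1 := by linear_combination hgt - hht - ha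
  have hc : g.1 1 0 = h.1 1 0 := mul_left_cancel₀ hb (by rw [hd] at hdet; linear_combination -hdet)
  ext i j
  fin_cases i <;> fin_cases j <;> assumption

lemma card_mul_sub_eq_le_two (t c : F) : Finset.card {a : F | a * (t - a) = c} ≤ 2 := by
  obtain hempty | ⟨r, hr⟩ := Finset.eq_empty_or_nonempty ({a : F | a * (t - a) = c} : Finset F)
  · rw [hempty]
    exact Nat.zero_le 2
  · refine (Finset.card_le_card fun a ha ↦ ?_).trans (Finset.card_le_two (a := r) (b := t - r))
    have hroots : (a - r) * (a - (t - r)) = 0 := by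
      linear_combination (Finset.mem_filter.mp hr).2 - (Finset.mem_filter.mp ha).2
    rw [Finset.mem_insert, Finset.mem_singleton]
    exact (mul_eq_zero.mp hroots).imp sub_eq_zero.mp sub_eq_zero.mp

lemma card_trace_eq_and_upper_right_eq_zero_le (t : F) :
    Finset.card {g : SL(2, F) | g.1.trace = t ∧ g.1 0 1 = 0} ≤ 2 * Fintype.card F := by
  have hdiag {g : SL(2, F)} (hg : g.1.trace = t ∧ g.1 0 1 = 0) :
      g.1 1 1 = t - g.1 0 0 ∧ g.1 0 0 * (t - g.1 0 0) = 1 := by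
    obtain ⟨htr, hb⟩ := hg
    have hdet := g.2
    rw [det_fin_two, hb] at hdet
    have hd : g.1 1 1 = t - g.1 0 0 := by rw [← htr, trace_fin_two, add_sub_cancel_left]
    exact ⟨hd, by rw [← hd]; linear_combination hdet⟩
  calc _ ≤ (({a : F | a * (t - a) = 1} : Finset F) ×ˢ (Finset.univ : Finset F)).card := ?_
    _ ≤ 2 * Fintype.card F := by
      rw [Finset.card_product, Finset.card_univ]
      exact Nat.mul_le_mul_right _ (card_mul_sub_eq_le_two t 1)
  refine Finset.card_le_card_of_injOn (fun g ↦ (g.1 0 0, g.1 1 0)) (fun g hg ↦ ?_) ?_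
  · have := (hdiag (Finset.mem_filter.mp hg).2).2
    simpa using this
  · intro g hg h hh hgh
    have hg' := (Finset.mem_filter.mp hg).2
    have hh' := (Finset.mem_filter.mp hh).2
    obtain ⟨ha, hc⟩ := Prod.mk.inj hgh
    have hb : g.1 0 1 = h.1 0 1 := hg'.2.trans hh'.2.symm
    have hd : g.1 1 1 = h.1 1 1 := by rw [(hdiag hg').1, (hdiag hh').1, ha]
    ext i j
    fin_cases i <;> fin_cases j <;> assumption

lemma card_trace_eq_le (t : F) :
    Finset.card {g : SL(2, F) | g.1.trace = t} ≤ Fintype.card F ^ 2 + Fintype.card F := by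
  have hsplit := Finset.card_filter_add_card_filter_not
    (s := {g : SL(2, F) | g.1.trace = t}) (fun g ↦ g.1 0 1 = 0)
  rw [Finset.filter_filter, Finset.filter_filter] at hsplit
  have hzero := card_trace_eq_and_upper_right_eq_zero_le t
  have hne := card_trace_eq_and_upper_right_ne_zero_le t
  rw [Nat.mul_sub_one, ← sq] at hne
  have := Nat.le_self_pow two_ne_zero (Fintype.card F)
  lia

lemma card_trace_sq_eq_le (c : F) :
    Finset.card {g : SL(2, F) | g.1.trace ^ 2 = c} ≤ 2 * (Fintype.card F ^ 2 + Fintype.card F) := by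
  obtain hempty | ⟨h, hh⟩ :=
    Finset.eq_empty_or_nonempty ({g : SL(2, F) | g.1.trace ^ 2 = c} : Finset SL(2, F))
  · rw [hempty]
    exact Nat.zero_le _
  · have hsub : ({g : SL(2, F) | g.1.trace ^ 2 = c} : Finset SL(2, F)) ⊆
        ({g : SL(2, F) | g.1.trace = h.1.trace} : Finset SL(2, F)) ∪
          ({g : SL(2, F) | g.1.trace = -h.1.trace} : Finset SL(2, F)) := by
      intro g hg
      rw [← Finset.filter_or, Finset.mem_filter]
      refine ⟨Finset.mem_univ g, sq_eq_sq_iff_eq_or_eq_neg.mp ?_⟩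
      exact (Finset.mem_filter.mp hg).2.trans (Finset.mem_filter.mp hh).2.symm
    rw [two_mul]
    exact (Finset.card_le_card hsub).trans <| (Finset.card_union_le _ _).trans <|
      add_le_add (card_trace_eq_le _) (card_trace_eq_le _)

end TraceCount

section OrderOfMkCount

variable {F : Type*} [Field F] [Fintype F] [DecidableEq F]

lemma card_orderOf_mk_eq_one_le : Finset.card {g : SL(2, F) | orderOf (g : PSL2 F) = 1} ≤ 2 := by
  simp only [orderOf_mk_eq_one_iff]
  rw [← Fintype.card_subtype, ← Nat.card_eq_fintype_card]
  exact (card_center_SL F (Fin 2)).trans_le (Nat.gcd_le_right _ two_pos)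

lemma card_orderOf_mk_eq_two_le : Finset.card {g : SL(2, F) | orderOf (g : PSL2 F) = 2} ≤
    Fintype.card F ^ 2 + Fintype.card F :=
  (Finset.card_le_card (Finset.monotone_filter_right _
    fun _ _ ↦ trace_eq_zero_of_orderOf_mk_eq_two)).trans (card_trace_eq_le 0)

lemma card_orderOf_mk_eq_three_le : Finset.card {g : SL(2, F) | orderOf (g : PSL2 F) = 3} ≤
    2 * (Fintype.card F ^ 2 + Fintype.card F) :=
  (Finset.card_le_card (Finset.monotone_filter_right _
    fun _ _ ↦ trace_sq_eq_one_of_orderOf_mk_eq_three)).trans (card_trace_sq_eq_le 1)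

lemma card_orderOf_mk_eq_four_le : Finset.card {g : SL(2, F) | orderOf (g : PSL2 F) = 4} ≤
    2 * (Fintype.card F ^ 2 + Fintype.card F) :=
  (Finset.card_le_card (Finset.monotone_filter_right _
    fun _ _ ↦ trace_sq_eq_two_of_orderOf_mk_eq_four)).trans (card_trace_sq_eq_le 2)

lemma mul_card_SL_le_sum_orderOf_mk_add {m : ℕ}
    (hm : ∀ x : PSL2 F, 4 < orderOf x → m + 5 ≤ orderOf x) :
    (m + 5) * Nat.card SL(2, F) ≤ ∑ g : SL(2, F), orderOf (g : PSL2 F) + 2 * (m + 4) +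
      (5 * m + 9) * (Fintype.card F ^ 2 + Fintype.card F) := by
  have h := mul_card_le_sum_add (fun g : SL(2, F) ↦ orderOf_pos (g : PSL2 F)) (m + 5)
  have hlarge : ∑ n ∈ Finset.Ico 5 (m + 5),
      (m + 5 - n) * Finset.card {g : SL(2, F) | orderOf (g : PSL2 F) = n} = 0 := by
    refine Finset.sum_eq_zero fun n hn ↦ ?_
    rw [Finset.mem_Ico] at hn
    rw [Finset.card_eq_zero.mpr (Finset.filter_eq_empty_iff.mpr fun g _ hg ↦ ?_), mul_zero]
    have := hm g (by omega)
    omega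
  rw [← Finset.sum_Ico_consecutive _ (show 1 ≤ 5 by norm_num) (Nat.le_add_left 5 m), hlarge] at h
  simp only [Finset.sum_Ico_succ_top, Finset.Ico_self, Finset.sum_empty, Nat.reduceLeDiff,
    Nat.reduceSubDiff] at h
  have h₁ := Nat.mul_le_mul_left (m + 4) (card_orderOf_mk_eq_one_le (F := F))
  have h₂ := Nat.mul_le_mul_left (m + 3) (card_orderOf_mk_eq_two_le (F := F))
  have h₃ := Nat.mul_le_mul_left (m + 2) (card_orderOf_mk_eq_three_le (F := F))
  have h₄ := Nat.mul_le_mul_left (m + 1) (card_orderOf_mk_eq_four_le (F := F))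
  linarith

end OrderOfMkCount

section AverageOrderPSL2

variable {F : Type*} [Field F] [Fintype F]

lemma le_avgOrder_PSL2 [Fintype (PSL2 F)] {m : ℕ}
    (hm : ∀ x : PSL2 F, 4 < orderOf x → m + 5 ≤ orderOf x) :
    (m + 5 : ℚ) - (5 * m + 9) / (Fintype.card F - 1) -
      2 * (m + 4) / ((Fintype.card F - 1) * Fintype.card F * (Fintype.card F + 1)) ≤
        avgOrder (PSL2 F) := by
  classical
  have hq : 1 < Fintype.card F := Fintype.one_lt_card
  have hq' : (0 : ℚ) < Fintype.card F - 1 := sub_pos.mpr (mod_cast hq)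
  have h := mul_card_SL_le_sum_orderOf_mk_add hm
  rw [card_SL_fin_two] at h
  qify [hq.le] at h
  rw [avgOrder_quotient, card_SL_fin_two]
  push_cast [hq.le]
  rw [le_div_iff₀ (by positivity)]
  field_simp
  linarith

lemma le_avgOrder_PSL2_of_eight_le_card [Fintype (PSL2 F)] (hF : 8 ≤ Fintype.card F) :
    71 / 20 ≤ avgOrder (PSL2 F) := by
  have h := le_avgOrder_PSL2 (F := F) (m := 0) fun _ ↦ id
  have hq : (8 : ℚ) ≤ Fintype.card F := mod_cast hF
  have hq' : (0 : ℚ) < Fintype.card F - 1 := by linarith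
  have hlinear : (9 : ℚ) / (Fintype.card F - 1) ≤ 9 / (8 - 1) := by gcongr
  have hcubic : (8 : ℚ) / ((Fintype.card F - 1) * Fintype.card F * (Fintype.card F + 1)) ≤
      8 / ((8 - 1) * 8 * (8 + 1)) := by gcongr
  norm_num at h hlinear hcubic ⊢
  linarith

lemma le_avgOrder_PSL2_of_card_eq_seven [Fintype (PSL2 F)] (hF : Fintype.card F = 7) :
    71 / 20 ≤ avgOrder (PSL2 F) := by
  have hcard : Nat.card (PSL2 F) = 168 := by
    have h := card_PSL2_mul_gcd F
    rw [hF, show Nat.gcd (7 - 1) 2 = 2 from rfl] at h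
    omega
  have hfive (x : PSL2 F) : orderOf x ≠ 5 := fun hx ↦ by
    have hdvd := hx ▸ orderOf_dvd_natCard x
    rw [hcard] at hdvd
    omega
  have h := le_avgOrder_PSL2 (F := F) (m := 1) fun x hx ↦ by have := hfive x; omega
  norm_num [hF] at h ⊢
  linarith

lemma card_PSL2_eq_sixty (hF : Fintype.card F = 4 ∨ Fintype.card F = 5) :
    Nat.card (PSL2 F) = 60 := by
  have h := card_PSL2_mul_gcd F
  rcases hF with hF | hF <;> norm_num [hF] at h <;> omega

lemma card_field_ne_six (F : Type*) [Field F] [Fintype F] : Fintype.card F ≠ 6 := fun hF ↦ by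
  have h := FiniteField.isPrimePow_card F
  rw [hF] at h
  exact absurd h (by decide)

end AverageOrderPSL2

theorem psl2_avgOrder_general (F : Type*) [Field F] [Fintype F] [Fintype (PSL2 F)]
    (hF : 4 ≤ Fintype.card F) :
    Nonempty (PSL2 F ≃* alternatingGroup (Fin 5)) ∨ 71 / 20 ≤ avgOrder (PSL2 F) := by
  have hsimple : IsSimpleGroup (PSL2 F) :=
    ProjectiveSpecialLinearGroup.rank_two_simple (Nat.card_eq_fintype_card (α := F) ▸ hF)
  obtain h45 | h7 | h8 : (Fintype.card F = 4 ∨ Fintype.card F = 5) ∨ Fintype.card F = 7 ∨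
      8 ≤ Fintype.card F := by
    have := card_field_ne_six F
    omega
  · exact Or.inl (nonempty_mulEquiv_alternatingGroup_of_card_eq_sixty (card_PSL2_eq_sixty h45))
  · exact Or.inr (le_avgOrder_PSL2_of_card_eq_seven h7)
  · exact Or.inr (le_avgOrder_PSL2_of_eight_le_card h8)

theorem psl2_avgOrder (F : Type*) [Field F] [Fintype F] [DecidableEq F]
    [Fintype (PSL2 F)]
    (hF : 4 ≤ Fintype.card F)
    (hp : ∀ p : ℕ, p.Prime → p ∣ Fintype.card (PSL2 F) → p ∈ ({2, 3, 5, 7, 11, 13} : Finset ℕ)) :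
    Nonempty (PSL2 F ≃* alternatingGroup (Fin 5)) ∨ 71 / 20 ≤ avgOrder (PSL2 F) :=
  psl2_avgOrder_general F hF
end
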